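/- Let C be a quasiminimal pregeometry class. Any two structures in C of the same uncountable cardinality are isomorphic as L-structures. -/

import Mathlib

open FirstOrder FirstOrder.Language Set Cardinal



universe u u' v w

namespace QM

variable {L : FirstOrder.Language.{v, w}}

/-- Formulas of `L_{ω₁,ω}`: built from atomic formulas by negation, countable
conjunction (indexed by `ℕ`), and universal quantification; `α` is the type of free
variables and `n` counts the de Bruijn bound variables. Countable disjunctions and
the existential quantifier are definable via negation. -/
inductive InfFormula (L : FirstOrder.Language.{v, w}) (α : Type u) : ℕ → Type (max u v w)
  | falsum {n : ℕ} : InfFormula L α n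
  | equal {n : ℕ} (t₁ t₂ : L.Term (α ⊕ (Fin n))) : InfFormula L α n
  | rel {n l : ℕ} (R : L.Relations l) (ts : Fin l → L.Term (α ⊕ (Fin n))) : InfFormula L α n
  | not {n : ℕ} (φ : InfFormula L α n) : InfFormula L α n
  | iInf {n : ℕ} (φ : ℕ → InfFormula L α n) : InfFormula L α n
  | all {n : ℕ} (φ : InfFormula L α (n + 1)) : InfFormula L α n

/-- Satisfaction of an `L_{ω₁,ω}`-formula in an `L`-structure `M`, given an
assignment `v` of the free variables and `xs` of the bound variables. -/
def InfFormula.Realize {M : Type u'} [L.Structure M] {α : Type u} :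
    ∀ {n : ℕ}, InfFormula L α n → (α → M) → (Fin n → M) → Prop
  | _, .falsum, _, _ => False
  | _, .equal t₁ t₂, v, xs => t₁.realize (Sum.elim v xs) = t₂.realize (Sum.elim v xs)
  | _, .rel R ts, v, xs => Structure.RelMap R (fun i => (ts i).realize (Sum.elim v xs))
  | _, .not φ, v, xs => ¬ φ.Realize v xs
  | _, .iInf φ, v, xs => ∀ i : ℕ, (φ i).Realize v xs
  | _, .all φ, v, xs => ∀ x : M, φ.Realize v (Fin.snoc xs x)

/-- An `L_{ω₁,ω}`-sentence. -/
abbrev InfSentence (L : FirstOrder.Language.{v, w}) := InfFormula L PEmpty 0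

/-- Satisfaction of an `L_{ω₁,ω}`-sentence. -/
def InfSentence.RealizeS (M : Type u') [L.Structure M] (φ : InfSentence L) : Prop :=
  InfFormula.Realize (M := M) φ PEmpty.elim (fun i => i.elim0)

/-- Satisfaction of an `L_{ω₁,ω}`-formula with parameters from the set `A`
and `m` free variables `v̄`, at the tuple `v`. -/
def InfFormula.RealizeP {M : Type u'} [L.Structure M] {A : Set M} {m : ℕ}
    (φ : InfFormula L (↥A ⊕ Fin m) 0) (v : Fin m → M) : Prop :=
  φ.Realize (Sum.elim Subtype.val v) (fun i => i.elim0)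

/-- The domain of a partial map, viewed as a graph (set of pairs). -/
def pdom {H : Type*} {H' : Type*} (p : Set (H × H')) : Set H := Prod.fst '' p

/-- The image of a partial map, viewed as a graph (set of pairs). -/
def pimg {H : Type*} {H' : Type*} (p : Set (H × H')) : Set H' := Prod.snd '' p

/-- The image of a set `X` under a partial map given as a graph. -/
def pimage {H : Type*} {H' : Type*} (p : Set (H × H')) (X : Set H) : Set H' :=
  {b | ∃ a ∈ X, (a, b) ∈ p}

/-- A partial map (given as its graph `p`) is a partial embedding if it preserves
quantifier-free first-order formulas. (This forces `p` to be the graph of an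
injective partial function.) -/
def IsPartialEmbedding {H : Type u} {H' : Type u} [L.Structure H] [L.Structure H']
    (p : Set (H × H')) : Prop :=
  ∀ (n : ℕ) (φ : L.Formula (Fin n)), BoundedFormula.IsQF φ →
    ∀ (a : Fin n → H) (b : Fin n → H'), (∀ i, (a i, b i) ∈ p) →
      (φ.Realize a ↔ φ.Realize b)

/-- A partial map is a σ-embedding if it is a partial embedding and preserves all
`L_{ω₁,ω}`-formulas with (possibly infinitely many) parameters from its domain;
equivalently `⟨M, m⟩_{m ∈ dom p} ≡_{ω₁,ω} ⟨N, p(m)⟩_{m ∈ dom p}`. -/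
def IsSigmaEmbedding {H : Type u} {H' : Type u} [L.Structure H] [L.Structure H']
    (p : Set (H × H')) : Prop :=
  IsPartialEmbedding (L := L) p ∧
    ∀ (φ : InfFormula L (↥(pdom p)) 0) (b : ↥(pdom p) → H'),
      (∀ x : ↥(pdom p), ((x : H), b x) ∈ p) →
        (φ.Realize Subtype.val (fun i => i.elim0) ↔ φ.Realize b (fun i => i.elim0))

/-- A pregeometry (combinatorial geometry) on a set. -/
structure IsPregeometry {α : Type*} (cl : Set α → Set α) : Prop where
  subset_cl : ∀ X, X ⊆ cl X
  mono : ∀ ⦃X Y : Set α⦄, X ⊆ Y → cl X ⊆ cl Y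
  idem : ∀ X, cl (cl X) = cl X
  finChar : ∀ (X : Set α) (y : α), y ∈ cl X → ∃ F : Finset α, ↑F ⊆ X ∧ y ∈ cl ↑F
  exchange : ∀ (X : Set α) (a b : α), a ∈ cl (X ∪ {b}) → a ∉ cl X → b ∈ cl (X ∪ {a})

/-- A pair `⟨H, cl_H⟩` of an `L`-structure and a closure operator on it. -/
structure QMObj (L : FirstOrder.Language.{v, w}) where
  carrier : Type u
  [str : L.Structure carrier]
  cl : Set carrier → Set carrier

attribute [instance] QMObj.str

/-- `G` is countable and closed, or empty. -/
def CCOE (H : QMObj.{u} L) (G : Set H.carrier) : Prop :=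
  (G.Countable ∧ H.cl G = G) ∨ G = ∅

/-- The axioms for a class of pairs `⟨H, cl_H⟩` to be a quasiminimal pregeometry class. -/
structure IsQMClass (C : Set (QMObj.{u} L)) : Prop where
  /-- Closure under isomorphisms, transporting the closure operator. -/
  iso_closed : ∀ H ∈ C, ∀ (N : Type u) [_iN : L.Structure N] (f : H.carrier ≃[L] N),
      (⟨N, fun X => f '' (H.cl (f ⁻¹' X))⟩ : QMObj L) ∈ C
  /-- Any two members satisfy the same quantifier-free sentences. -/
  qf_theory : ∀ H ∈ C, ∀ H' ∈ C, ∀ (φ : L.Sentence), BoundedFormula.IsQF φ →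
      (H.carrier ⊨ φ ↔ H'.carrier ⊨ φ)
  /-- Each `cl_H` is a pregeometry. -/
  pregeom : ∀ H ∈ C, IsPregeometry H.cl
  /-- The closure of a finite set is countable. -/
  cl_finite_countable : ∀ H ∈ C, ∀ X : Set H.carrier, X.Finite → (H.cl X).Countable
  /-- The closure of any set is (the underlying set of) a substructure which, with the
  restricted closure operator, is again a member of the class. -/
  cl_mem : ∀ H ∈ C, ∀ X : Set H.carrier, ∃ S : L.Substructure H.carrier,
      (S : Set H.carrier) = H.cl X ∧
      (⟨↥S, fun Y => Subtype.val ⁻¹' (H.cl (Subtype.val '' Y))⟩ : QMObj L) ∈ C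
  /-- Partial embeddings preserve and reflect the closure relation. -/
  cl_embedding : ∀ H ∈ C, ∀ H' ∈ C, ∀ (p : Set (H.carrier × H'.carrier)),
      IsPartialEmbedding (L := L) p → ∀ X ⊆ pdom p, ∀ (y : H.carrier) (y' : H'.carrier),
        (y, y') ∈ p → (y ∈ H.cl X ↔ y' ∈ H'.cl (pimage p X))
  /-- ℵ₀-homogeneity over countable closed models, part (i): an isomorphism between
  countable closed (or empty) sets extends by any pair of independent points. -/
  homogeneity₁ : ∀ H ∈ C, ∀ H' ∈ C, ∀ (g : Set (H.carrier × H'.carrier)),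
      CCOE H (pdom g) → CCOE H' (pimg g) → IsPartialEmbedding (L := L) g →
      ∀ (x : H.carrier) (x' : H'.carrier), x ∉ H.cl (pdom g) → x' ∉ H'.cl (pimg g) →
        IsPartialEmbedding (L := L) (g ∪ {(x, x')})
  /-- ℵ₀-homogeneity over countable closed models, part (ii). -/
  homogeneity₂ : ∀ H ∈ C, ∀ H' ∈ C, ∀ (g f : Set (H.carrier × H'.carrier)),
      CCOE H (pdom g) → CCOE H' (pimg g) → IsPartialEmbedding (L := L) g →
      (pdom f).Finite → IsPartialEmbedding (L := L) (g ∪ f) →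
      ∀ y ∈ H.cl (pdom f ∪ pdom g), ∃ y' : H'.carrier,
        IsPartialEmbedding (L := L) (g ∪ f ∪ {(y, y')})


/-- `p` is a σ-type over `A` in `m` variables: every countable subset of `p` is
consistent with the structure, i.e. simultaneously satisfiable. -/
def IsSigmaType {M : Type u'} [L.Structure M] {A : Set M} {m : ℕ}
    (p : Set (InfFormula L (↥A ⊕ Fin m) 0)) : Prop :=
  ∀ Φ ⊆ p, Φ.Countable → ∃ v : Fin m → M, ∀ φ ∈ Φ, φ.RealizeP v

/-- A σ-type `p` is isolated if there is a consistent `L_{ω₁,ω}`-formula `ψ(x̄)`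
(possibly with parameters from `M`) such that `ψ` implies every formula of `p`. -/
def IsIsolated {M : Type u'} [L.Structure M] {A : Set M} {m : ℕ}
    (p : Set (InfFormula L (↥A ⊕ Fin m) 0)) : Prop :=
  ∃ ψ : InfFormula L (M ⊕ Fin m) 0,
    (∃ v : Fin m → M, ψ.Realize (Sum.elim id v) (fun i => i.elim0)) ∧
    ∀ φ ∈ p, ∀ v : Fin m → M, ψ.Realize (Sum.elim id v) (fun i => i.elim0) → φ.RealizeP v

/-- A σ-type `p` is realised if some tuple satisfies every formula of `p`. -/
def IsRealized {M : Type u'} [L.Structure M] {A : Set M} {m : ℕ}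
    (p : Set (InfFormula L (↥A ⊕ Fin m) 0)) : Prop :=
  ∃ v : Fin m → M, ∀ φ ∈ p, φ.RealizeP v

/-- `B` is an independent subset of the pregeometry `⟨H, cl_H⟩`. -/
def IsIndep (H : QMObj.{u} L) (B : Set H.carrier) : Prop :=
  ∀ x ∈ B, x ∉ H.cl (B \ {x})

/-- `B` is a basis of the pregeometry `⟨H, cl_H⟩`: a maximal independent subset. -/
def IsBasis (H : QMObj.{u} L) (B : Set H.carrier) : Prop :=
  IsIndep H B ∧ ∀ B' : Set H.carrier, B ⊆ B' → IsIndep H B' → B' = B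

/-- The model-theoretic algebraic closure of `X` in `M`: the set of elements
satisfying some first-order formula with parameters in `X` having finitely many
solutions. -/
def aclS (L : FirstOrder.Language.{v, w}) (M : Type u) [L.Structure M] (X : Set M) :
    Set M :=
  {y | ∃ (n : ℕ) (φ : L.BoundedFormula (Fin n) 1) (v : Fin n → M),
    (∀ i, v i ∈ X) ∧ φ.Realize v ![y] ∧ {z : M | φ.Realize v ![z]}.Finite}



section Toolbox

/-- Abbreviation for partial embeddings. -/
abbrev PE {H H' : Type u} [L.Structure H] [L.Structure H'] (p : Set (H × H')) : Prop :=
  IsPartialEmbedding (L := L) p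

/-- The inverse graph. -/
def pinv {α β : Type*} (p : Set (α × β)) : Set (β × α) := {x | (x.2, x.1) ∈ p}

/-- The composition of graphs. -/
def pcomp {α β γ : Type*} (p : Set (α × β)) (q : Set (β × γ)) : Set (α × γ) :=
  {x | ∃ b, (x.1, b) ∈ p ∧ (b, x.2) ∈ q}

/-- The diagonal of a set. -/
def pdiag {α : Type*} (A : Set α) : Set (α × α) := {x | x.1 = x.2 ∧ x.1 ∈ A}

lemma mem_pdom {α β : Type*} {p : Set (α × β)} {a : α} : a ∈ pdom p ↔ ∃ b, (a, b) ∈ p := by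
  simp [pdom]

lemma mem_pimg {α β : Type*} {p : Set (α × β)} {b : β} : b ∈ pimg p ↔ ∃ a, (a, b) ∈ p := by
  simp [pimg]

lemma pdom_pinv {α β : Type*} (p : Set (α × β)) : pdom (pinv p) = pimg p := by
  ext x; simp [mem_pdom, mem_pimg, pinv]

lemma pimg_pinv {α β : Type*} (p : Set (α × β)) : pimg (pinv p) = pdom p := by
  ext x; simp [mem_pdom, mem_pimg, pinv]

lemma pinv_pinv {α β : Type*} (p : Set (α × β)) : pinv (pinv p) = p := by
  ext x; simp [pinv]

lemma pdom_mono {α β : Type*} {p q : Set (α × β)} (h : p ⊆ q) : pdom p ⊆ pdom q :=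
  Set.image_mono h

lemma pimg_mono {α β : Type*} {p q : Set (α × β)} (h : p ⊆ q) : pimg p ⊆ pimg q :=
  Set.image_mono h

lemma pdom_union {α β : Type*} (p q : Set (α × β)) : pdom (p ∪ q) = pdom p ∪ pdom q :=
  Set.image_union _ _ _

lemma pimg_union {α β : Type*} (p q : Set (α × β)) : pimg (p ∪ q) = pimg p ∪ pimg q :=
  Set.image_union _ _ _

lemma pdom_diag {α : Type*} (A : Set α) : pdom (pdiag A) = A := by
  ext x; simp [mem_pdom, pdiag]

lemma pimg_diag {α : Type*} (A : Set α) : pimg (pdiag A) = A := by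
  ext x; simp [mem_pimg, pdiag]

lemma pdom_single {α β : Type*} (a : α) (b : β) : pdom {(a, b)} = {a} := by
  simp [pdom]

lemma pimg_single {α β : Type*} (a : α) (b : β) : pimg {(a, b)} = {b} := by
  simp [pimg]

variable {H H' H'' : Type u} [L.Structure H] [L.Structure H'] [L.Structure H'']

lemma PE.mono {p q : Set (H × H')} (hq : PE (L := L) q) (h : p ⊆ q) : PE (L := L) p :=
  fun n φ hφ a b hab => hq n φ hφ a b fun i => h (hab i)

lemma PE.symm {p : Set (H × H')} (hp : PE (L := L) p) : PE (L := L) (pinv p) :=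
  fun n φ hφ a b hab => (hp n φ hφ b a hab).symm

lemma PE.comp {p : Set (H × H')} {q : Set (H' × H'')} (hp : PE (L := L) p)
    (hq : PE (L := L) q) : PE (L := L) (pcomp p q) := by
  intro n φ hφ a b hab
  choose c hc using hab
  exact (hp n φ hφ a c fun i => (hc i).1).trans (hq n φ hφ c b fun i => (hc i).2)

lemma PE.diag (A : Set H) : PE (L := L) (pdiag A) := by
  intro n φ hφ a b hab
  have : a = b := funext fun i => (hab i).1
  rw [this]

lemma PE.of_finite {p : Set (H × H')} (h : ∀ q ⊆ p, q.Finite → PE (L := L) q) :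
    PE (L := L) p := by
  intro n φ hφ a b hab
  refine h (Set.range fun i => (a i, b i)) ?_ (Set.finite_range _) n φ hφ a b fun i => ⟨i, rfl⟩
  rintro _ ⟨i, rfl⟩
  exact hab i

lemma PE.eq_iff {p : Set (H × H')} (hp : PE (L := L) p) {a b : H} {a' b' : H'}
    (h1 : (a, a') ∈ p) (h2 : (b, b') ∈ p) : a = b ↔ a' = b' := by
  have := hp 2 (Term.equal (Term.var 0) (Term.var 1)) 
    (BoundedFormula.IsAtomic.equal _ _).isQF ![a, b] ![a', b'] (by
      intro i; fin_cases i <;> simpa)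
  simpa [Formula.realize_equal] using this

lemma PE.iUnion {s : ℕ → Set (H × H')} (hm : Monotone s) (hs : ∀ n, PE (L := L) (s n)) :
    PE (L := L) (⋃ n, s n) := by
  intro n φ hφ a b hab
  have : ∀ i, ∃ k, (a i, b i) ∈ s k := fun i => by simpa using hab i
  choose k hk using this
  refine hs (Finset.univ.sup k) n φ hφ a b fun i => hm (Finset.le_sup (Finset.mem_univ i)) (hk i)

lemma PE.toEquiv {p : Set (H × H')} (hp : PE (L := L) p) (hd : pdom p = Set.univ)
    (hi : pimg p = Set.univ) : Nonempty (H ≃[L] H') := by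
  have h1 : ∀ a, ∃ b, (a, b) ∈ p := fun a => mem_pdom.1 (hd ▸ mem_univ a)
  have h2 : ∀ b, ∃ a, (a, b) ∈ p := fun b => mem_pimg.1 (hi ▸ mem_univ b)
  choose f hf using h1
  choose g hg using h2
  refine ⟨{ toFun := f, invFun := g, left_inv := ?_, right_inv := ?_, map_fun' := ?_, map_rel' := ?_ }⟩
  · intro a
    exact (hp.eq_iff (hg (f a)) (hf a)).2 rfl
  · intro b
    exact (hp.eq_iff (hf (g b)) (hg b)).1 rfl
  · intro n F x
    have := hp (n+1) (Term.equal (Term.func F fun i => Term.var i.succ) (Term.var 0))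
      (BoundedFormula.IsAtomic.equal _ _).isQF (Fin.cons (Structure.funMap F x) x)
      (Fin.cons (f (Structure.funMap F x)) (f ∘ x)) (by
        intro i
        refine Fin.cases ?_ (fun j => ?_) i
        · simpa using hf _
        · simpa using hf _)
    simp [Formula.realize_equal] at this
    exact this.symm
  · intro n R x
    have := hp n (R.formula fun i => Term.var i)
      (BoundedFormula.IsAtomic.rel _ _).isQF x (f ∘ x) (fun i => hf _)
    simp only [Formula.realize_rel, Term.realize_var] at this
    exact this.symm

/-- A generic countable construction. -/
lemma chain_construct {S K : Type*} [Countable K] (P : Set S → Prop) (Done : K → Set S → Prop)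
    (h : ∀ k r, P r → ∃ r', r ⊆ r' ∧ P r' ∧ Done k r') (r0 : Set S) (h0 : P r0) :
    ∃ s : ℕ → Set S, s 0 = r0 ∧ Monotone s ∧ (∀ n, P (s n)) ∧ ∀ k, ∃ n, Done k (s n) := by
  rcases isEmpty_or_nonempty K with hK | hK
  · exact ⟨fun _ => r0, rfl, monotone_const, fun _ => h0, fun k => (hK.false k).elim⟩
  obtain ⟨e, he⟩ := exists_surjective_nat K
  choose F hF using h
  let t : ℕ → {r : Set S // P r} := fun n =>
    Nat.rec ⟨r0, h0⟩ (fun n r => ⟨F (e n) r.1 r.2, (hF (e n) r.1 r.2).2.1⟩) n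
  refine ⟨fun n => (t n).1, rfl, monotone_nat_of_le_succ fun n => ?_, fun n => (t n).2, fun k => ?_⟩
  · exact (hF (e n) (t n).1 (t n).2).1
  · obtain ⟨n, rfl⟩ := he k
    exact ⟨n + 1, (hF (e n) (t n).1 (t n).2).2.2⟩

end Toolbox

section Pregeom

variable {α : Type*} {cl : Set α → Set α}

lemma IsPregeometry.cl_le (h : IsPregeometry cl) {X Y : Set α} (hX : X ⊆ cl Y) :
    cl X ⊆ cl Y := by
  have := h.mono hX
  rwa [h.idem] at this

lemma IsPregeometry.cl_union_left (h : IsPregeometry cl) (X Y : Set α) :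
    cl (cl X ∪ Y) = cl (X ∪ Y) := by
  apply Subset.antisymm
  · apply h.cl_le
    apply union_subset (h.mono subset_union_left)
    exact subset_union_right.trans (h.subset_cl _)
  · exact h.mono (union_subset_union_left _ (h.subset_cl _))

lemma IsPregeometry.countable_cl (h : IsPregeometry cl) (hf : ∀ X : Set α, X.Finite → (cl X).Countable)
    {X : Set α} (hX : X.Countable) : (cl X).Countable := by
  have : cl X ⊆ ⋃ F ∈ {F : Set α | F ⊆ X ∧ F.Finite}, cl F := by
    intro y hy
    obtain ⟨F, hF, hy⟩ := h.finChar X y hy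
    exact mem_biUnion (show (F : Set α) ∈ _ from ⟨hF, F.finite_toSet⟩) hy
  refine Set.Countable.mono this ?_
  refine Set.Countable.biUnion ?_ fun F hF => hf F hF.2
  refine (Set.countable_ofPred_finite_subset hX).mono ?_
  rintro F ⟨h1, h2⟩
  exact ⟨h2, h1⟩

/-- A finite subset of the closure of the image of a set is in the closure of the image of
a finite set. -/
lemma IsPregeometry.finite_support (h : IsPregeometry cl) {ι : Type*} (u : ι → α) (T : Set ι)
    {E : Set α} (hE : E.Finite) (hET : E ⊆ cl (u '' T)) :
    ∃ D ⊆ T, D.Finite ∧ E ⊆ cl (u '' D) := by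
  induction E, hE using Set.Finite.induction_on with
  | empty => exact ⟨∅, empty_subset _, finite_empty, empty_subset _⟩
  | @insert a s ha hs ih =>
    obtain ⟨D, hDT, hD, hsD⟩ := ih ((subset_insert _ _).trans hET)
    obtain ⟨F, hF, haF⟩ := h.finChar _ _ (hET (mem_insert _ _))
    classical
    obtain ⟨D', hD'T, hF'⟩ := Finset.subset_set_image_iff.1 hF
    refine ⟨D ∪ D', union_subset hDT hD'T, hD.union D'.finite_toSet, insert_subset ?_ ?_⟩
    · refine h.mono ?_ haF
      rw [← hF', Finset.coe_image]
      exact image_mono subset_union_right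
    · exact hsD.trans (h.mono (image_mono subset_union_left))

end Pregeom


section Extend

lemma cle {C : Set (QMObj.{u} L)} (hC : IsQMClass C)
    {H H' : QMObj.{u} L} (hH : H ∈ C) (hH' : H' ∈ C) {p q : Set (H.carrier × H'.carrier)}
    (hp : PE (L := L) p) (hq : q ⊆ p) {y : H.carrier} {y' : H'.carrier} (hy : (y, y') ∈ p) :
    y ∈ H.cl (pdom q) ↔ y' ∈ H'.cl (pimg q) := by
  rw [hC.cl_embedding H hH H' hH' p hp (pdom q) (pdom_mono hq) y y' hy]
  have : pimage p (pdom q) = pimg q := by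
    ext b
    constructor
    · rintro ⟨a, ha, hab⟩
      obtain ⟨b', hb'⟩ := mem_pdom.1 ha
      have := (hp.eq_iff hab (hq hb')).1 rfl
      subst this
      exact mem_pimg.2 ⟨a, hb'⟩
    · intro hb
      obtain ⟨a, ha⟩ := mem_pimg.1 hb
      exact ⟨a, mem_pdom.2 ⟨b, ha⟩, hq ha⟩
  rw [this]

lemma hom2_back {C : Set (QMObj.{u} L)} (hC : IsQMClass C)
    {H H' : QMObj.{u} L} (hH : H ∈ C) (hH' : H' ∈ C)
    (g f : Set (H.carrier × H'.carrier)) (h1 : CCOE H (pdom g)) (h2 : CCOE H' (pimg g))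
    (hf : (pimg f).Finite) (hgf : PE (L := L) (g ∪ f)) (y' : H'.carrier)
    (hy' : y' ∈ H'.cl (pimg f ∪ pimg g)) :
    ∃ y : H.carrier, PE (L := L) (g ∪ f ∪ {(y, y')}) := by
  obtain ⟨y, hy⟩ := hC.homogeneity₂ H' hH' H hH (pinv g) (pinv f) (by rwa [pdom_pinv])
    (by rwa [pimg_pinv]) (PE.symm (hgf.mono subset_union_left)) (by rwa [pdom_pinv])
    (PE.symm hgf) y' (by rwa [pdom_pinv, pdom_pinv])
  refine ⟨y, PE.mono (PE.symm (L := L) hy) ?_⟩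
  rintro ⟨a, b⟩ hab
  simp [pinv] at hab ⊢
  tauto

lemma extend_cl {C : Set (QMObj.{u} L)} (hC : IsQMClass C)
    {H H' : QMObj.{u} L} (hH : H ∈ C) (hH' : H' ∈ C)
    (g f : Set (H.carrier × H'.carrier)) (h1 : CCOE H (pdom g)) (h2 : CCOE H' (pimg g))
    (hf : f.Finite) (hgf : PE (L := L) (g ∪ f)) :
    ∃ p : Set (H.carrier × H'.carrier), PE (L := L) p ∧ g ∪ f ⊆ p ∧
      pdom p = H.cl (pdom (g ∪ f)) ∧ pimg p = H'.cl (pimg (g ∪ f)) := by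
  have hg : PE (L := L) g := hgf.mono subset_union_left
  have pg := hC.pregeom H hH
  have pg' := hC.pregeom H' hH'
  have cg : (pdom g).Countable := by
    rcases h1 with h | h
    · exact h.1
    · simp [h]
  have cg' : (pimg g).Countable := by
    rcases h2 with h | h
    · exact h.1
    · simp [h]
  have c1 : (H.cl (pdom (g ∪ f))).Countable := by
    refine pg.countable_cl (hC.cl_finite_countable H hH) ?_
    rw [pdom_union]
    exact cg.union (hf.image _).countable
  have c2 : (H'.cl (pimg (g ∪ f))).Countable := by
    refine pg'.countable_cl (hC.cl_finite_countable H' hH') ?_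
    rw [pimg_union]
    exact cg'.union (hf.image _).countable
  have := c1.to_subtype
  have := c2.to_subtype
  let P : Set (H.carrier × H'.carrier) → Prop := fun r => f ⊆ r ∧ r.Finite ∧ PE (L := L) (g ∪ r) ∧
    ∀ x ∈ r, x.1 ∈ H.cl (pdom (g ∪ f)) ∧ x.2 ∈ H'.cl (pimg (g ∪ f))
  let Done : (↥(H.cl (pdom (g ∪ f))) ⊕ ↥(H'.cl (pimg (g ∪ f)))) →
    Set (H.carrier × H'.carrier) → Prop := fun k r =>
      Sum.elim (fun a => a.1 ∈ pdom r) (fun b => b.1 ∈ pimg r) k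
  have hgood : ∀ r, P r → ∀ y y', PE (L := L) (g ∪ r ∪ {(y, y')}) →
      (y ∈ H.cl (pdom (g ∪ f)) ∨ y' ∈ H'.cl (pimg (g ∪ f))) → P (r ∪ {(y, y')}) := by
    rintro r ⟨hfr, hrf, hr, hr2⟩ y y' hy hor
    have key := cle hC hH hH' hy (q := g ∪ f)
      ((union_subset_union_right _ hfr).trans subset_union_left) (Or.inr rfl : (y, y') ∈ _)
    refine ⟨hfr.trans subset_union_left, hrf.union (finite_singleton _), by rwa [← union_assoc], ?_⟩
    rintro x (hx | hx)
    · exact hr2 x hx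
    · rw [mem_singleton_iff] at hx
      subst hx
      simp only
      tauto
  obtain ⟨s, hs0, hsm, hsP, hsD⟩ := chain_construct P Done (by
    rintro (⟨a, ha⟩ | ⟨b, hb⟩) r hr
    · obtain ⟨y', hy'⟩ := hC.homogeneity₂ H hH H' hH' g r h1 h2 hg (hr.2.1.image _) hr.2.2.1 a
        (pg.mono (by rw [← pdom_union, union_comm]; exact pdom_mono (union_subset_union_left _ hr.1)) ha)
      refine ⟨_, subset_union_left, hgood r hr _ _ hy' (Or.inl ha), ?_⟩
      exact mem_pdom.2 ⟨y', Or.inr rfl⟩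
    · obtain ⟨y, hy⟩ := hom2_back hC hH hH' g r h1 h2 (hr.2.1.image _) hr.2.2.1 b
        (pg'.mono (by rw [← pimg_union, union_comm]; exact pimg_mono (union_subset_union_left _ hr.1)) hb)
      refine ⟨_, subset_union_left, hgood r hr _ _ hy (Or.inr hb), ?_⟩
      exact mem_pimg.2 ⟨y, Or.inr rfl⟩) f ⟨Subset.rfl, hf, hgf, fun x hx =>
        ⟨pg.subset_cl _ (mem_pdom.2 ⟨x.2, Or.inr hx⟩), pg'.subset_cl _ (mem_pimg.2 ⟨x.1, Or.inr hx⟩)⟩⟩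
  have hle : ∀ n, g ∪ s n ⊆ ⋃ n, (g ∪ s n) := fun n => subset_iUnion (fun n => g ∪ s n) n
  refine ⟨⋃ n, (g ∪ s n), PE.iUnion (fun a b hab => union_subset_union_right _ (hsm hab))
    fun n => (hsP n).2.2.1, ?_, ?_, ?_⟩
  · have := hle 0
    rwa [hs0] at this
  · apply Subset.antisymm
    · intro a ha
      obtain ⟨b, hb⟩ := mem_pdom.1 ha
      obtain ⟨n, hn⟩ := mem_iUnion.1 hb
      rcases hn with hn | hn
      · exact pg.subset_cl _ (mem_pdom.2 ⟨b, Or.inl hn⟩)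
      · exact ((hsP n).2.2.2 _ hn).1
    · intro a ha
      obtain ⟨n, hn⟩ := hsD (Sum.inl ⟨a, ha⟩)
      exact pdom_mono (subset_union_right.trans (hle n)) hn
  · apply Subset.antisymm
    · intro b hb
      obtain ⟨a, ha⟩ := mem_pimg.1 hb
      obtain ⟨n, hn⟩ := mem_iUnion.1 ha
      rcases hn with hn | hn
      · exact pg'.subset_cl _ (mem_pimg.2 ⟨a, Or.inl hn⟩)
      · exact ((hsP n).2.2.2 _ hn).2
    · intro a ha
      obtain ⟨n, hn⟩ := hsD (Sum.inr ⟨a, ha⟩)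
      exact pimg_mono (subset_union_right.trans (hle n)) hn

/-- Independent families, relative to an index set. -/
def IndepOn {α ι : Type*} (cl : Set α → Set α) (u : ι → α) (I : Set ι) : Prop :=
  ∀ i ∈ I, ∀ J ⊆ I, i ∉ J → u i ∉ cl (u '' J)

lemma extend_indep {C : Set (QMObj.{u} L)} (hC : IsQMClass C)
    {H H' : QMObj.{u} L} (hH : H ∈ C) (hH' : H' ∈ C) {ι : Type*}
    (u : ι → H.carrier) (v : ι → H'.carrier) {I0 I : Set ι} (hI0 : I0 ⊆ I) (hI : I.Countable)
    (hu : IndepOn H.cl u I) (hv : IndepOn H'.cl v I)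
    {p : Set (H.carrier × H'.carrier)} (hp : PE (L := L) p)
    (hpd : pdom p = H.cl (u '' I0)) (hpi : pimg p = H'.cl (v '' I0))
    (hp0 : ∀ i ∈ I0, (u i, v i) ∈ p) :
    ∃ p' : Set (H.carrier × H'.carrier), PE (L := L) p' ∧ p ⊆ p' ∧
      pdom p' = H.cl (u '' I) ∧ pimg p' = H'.cl (v '' I) ∧ ∀ i ∈ I, (u i, v i) ∈ p' := by
  have pg := hC.pregeom H hH
  have pg' := hC.pregeom H' hH'
  have := hI.to_subtype
  let P : Set (H.carrier × H'.carrier) → Prop := fun r => PE (L := L) r ∧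
    ∃ J ⊆ I, pdom r = H.cl (u '' J) ∧ pimg r = H'.cl (v '' J) ∧ ∀ i ∈ J, (u i, v i) ∈ r
  obtain ⟨s, hs0, hsm, hsP, hsD⟩ := chain_construct P (K := I) (fun i r => (u i, v i) ∈ r) (by
    rintro ⟨i, hi⟩ r ⟨hr, J, hJ, hd, him, hJr⟩
    by_cases hiJ : i ∈ J
    · exact ⟨r, Subset.rfl, ⟨hr, J, hJ, hd, him, hJr⟩, hJr i hiJ⟩
    have cc1 : CCOE H (pdom r) := by
      refine Or.inl ⟨?_, by rw [hd, pg.idem]⟩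
      rw [hd]
      exact pg.countable_cl (hC.cl_finite_countable H hH) ((hI.mono hJ).image _)
    have cc2 : CCOE H' (pimg r) := by
      refine Or.inl ⟨?_, by rw [him, pg'.idem]⟩
      rw [him]
      exact pg'.countable_cl (hC.cl_finite_countable H' hH') ((hI.mono hJ).image _)
    have h1 := hC.homogeneity₁ H hH H' hH' r cc1 cc2 hr (u i) (v i)
      (by rw [hd, pg.idem]; exact hu i hi J hJ hiJ) (by rw [him, pg'.idem]; exact hv i hi J hJ hiJ)
    obtain ⟨r', hr', hrr', hd', hi'⟩ := extend_cl hC hH hH' r {(u i, v i)} cc1 cc2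
      (finite_singleton _) h1
    refine ⟨r', subset_union_left.trans hrr', ⟨hr', insert i J, insert_subset hi hJ, ?_, ?_, ?_⟩,
      hrr' (Or.inr rfl)⟩
    · rw [hd', pdom_union, pdom_single, hd, pg.cl_union_left, image_insert_eq, union_singleton]
    · rw [hi', pimg_union, pimg_single, him, pg'.cl_union_left, image_insert_eq, union_singleton]
    · rintro j (rfl | hj)
      · exact hrr' (Or.inr rfl)
      · exact hrr' (Or.inl (hJr j hj))) p ⟨hp, I0, hI0, hpd, hpi, hp0⟩
  have hle : ∀ n, s n ⊆ ⋃ n, s n := fun n => subset_iUnion s n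
  have hall : ∀ i ∈ I, ∃ n, (u i, v i) ∈ s n := fun i hi => hsD ⟨i, hi⟩
  refine ⟨⋃ n, s n, PE.iUnion hsm fun n => (hsP n).1, hs0 ▸ hle 0, ?_, ?_, ?_⟩
  · apply Subset.antisymm
    · intro a ha
      obtain ⟨b, hb⟩ := mem_pdom.1 ha
      obtain ⟨n, hn⟩ := mem_iUnion.1 hb
      obtain ⟨hr, J, hJ, hd, him, hJr⟩ := hsP n
      have : a ∈ pdom (s n) := mem_pdom.2 ⟨b, hn⟩
      rw [hd] at this
      exact pg.mono (image_mono hJ) this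
    · intro a ha
      obtain ⟨D, hDI, hD, haD⟩ := pg.finite_support u I (finite_singleton a) (singleton_subset_iff.2 ha)
      choose! k hk using hall
      obtain ⟨m, hm⟩ := (hD.image k).bddAbove
      obtain ⟨hr, J, hJ, hd, him, hJr⟩ := hsP m
      refine pdom_mono (hle m) ?_
      rw [hd]
      refine pg.cl_le ?_ (haD rfl)
      rintro _ ⟨i, hi, rfl⟩
      rw [← hd]
      exact mem_pdom.2 ⟨v i, hsm (hm ⟨i, hi, rfl⟩) (hk i (hDI hi))⟩
  · apply Subset.antisymm
    · intro a ha
      obtain ⟨b, hb⟩ := mem_pimg.1 ha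
      obtain ⟨n, hn⟩ := mem_iUnion.1 hb
      obtain ⟨hr, J, hJ, hd, him, hJr⟩ := hsP n
      have : a ∈ pimg (s n) := mem_pimg.2 ⟨b, hn⟩
      rw [him] at this
      exact pg'.mono (image_mono hJ) this
    · intro a ha
      obtain ⟨D, hDI, hD, haD⟩ := pg'.finite_support v I (finite_singleton a) (singleton_subset_iff.2 ha)
      choose! k hk using hall
      obtain ⟨m, hm⟩ := (hD.image k).bddAbove
      obtain ⟨hr, J, hJ, hd, him, hJr⟩ := hsP m
      refine pimg_mono (hle m) ?_
      rw [him]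
      refine pg'.cl_le ?_ (haD rfl)
      rintro _ ⟨i, hi, rfl⟩
      rw [← him]
      exact mem_pimg.2 ⟨u i, hsm (hm ⟨i, hi, rfl⟩) (hk i (hDI hi))⟩
  · intro i hi
    obtain ⟨n, hn⟩ := hall i hi
    exact hle n hn

lemma pe_empty {C : Set (QMObj.{u} L)} (hC : IsQMClass C)
    {H H' : QMObj.{u} L} (hH : H ∈ C) (hH' : H' ∈ C) :
    PE (L := L) (∅ : Set (H.carrier × H'.carrier)) := by
  intro n φ hφ a b hab
  match n with
  | 0 =>
    have := hC.qf_theory H hH H' hH' (φ.relabel (Fin.elim0 : Fin 0 → Empty)) (hφ.relabel _)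
    simp only [Sentence.Realize, Formula.realize_relabel] at this
    convert this
  | n + 1 => exact (hab 0).elim

end Extend

section Reflect

lemma perm_inv_app {Ω : Type*} (e : Equiv.Perm Ω) (x : Ω) : e⁻¹ (e x) = x := e.symm_apply_apply x

lemma perm_app_inv {Ω : Type*} (e : Equiv.Perm Ω) (x : Ω) : e (e⁻¹ x) = x := e.apply_symm_apply x

/-- The finite set of reflected points. -/
def reflSet {Ω κ : Type*} (σ : κ → Equiv.Perm Ω) : List κ → Set Ω → Set Ω
  | [], _ => ∅
  | i :: l, E => reflSet σ l (E ∪ σ i '' E) ∪ σ i '' E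

lemma reflSet_finite {Ω κ : Type*} (σ : κ → Equiv.Perm Ω) (l : List κ) (E : Set Ω)
    (hE : E.Finite) : (reflSet σ l E).Finite := by
  induction l generalizing E with
  | nil => exact finite_empty
  | cons i l ih => exact (ih _ (hE.union (hE.image _))).union (hE.image _)

lemma reflSet_sub {Ω κ : Type*} (σ : κ → Equiv.Perm Ω) (P O : κ → Set Ω)
    (h1 : ∀ i, ∀ x ∈ P i, σ i x ∈ O i) (h2 : ∀ i j, i ≠ j → ∀ x ∈ P j, σ i x ∈ P j)
    (l : List κ) (hl : l.Nodup) (E : Set Ω)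
    (hE : ∀ e ∈ E, ∀ j ∈ l, e ∈ P j) : ∀ x ∈ reflSet σ l E, ∃ j ∈ l, x ∈ O j := by
  induction l generalizing E with
  | nil => intro x hx; exact hx.elim
  | cons i l ih =>
    rw [List.nodup_cons] at hl
    rintro x (hx | ⟨e, he, rfl⟩)
    · obtain ⟨j, hj, hxj⟩ := ih hl.2 (E ∪ σ i '' E) (by
        rintro e (he | ⟨e, he, rfl⟩) j hj
        · exact hE e he j (List.mem_cons_of_mem _ hj)
        · refine h2 i j ?_ _ (hE e he j (List.mem_cons_of_mem _ hj))
          rintro rfl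
          exact hl.1 hj) x hx
      exact ⟨j, List.mem_cons_of_mem _ hj, hxj⟩
    · exact ⟨i, List.mem_cons_self, h1 i e (hE e he i List.mem_cons_self)⟩

lemma reflect_core {Ω κ : Type*} (Q : κ → Set Ω) (σ : κ → Equiv.Perm Ω)
    (Γ : Subgroup (Equiv.Perm Ω)) (hΓ : ∀ g ∈ Γ, ∀ j, ∀ x ∈ Q j, g x ∈ Q j)
    (hσΓ : ∀ i, σ i ∈ Γ) (hσ : ∀ i, ∀ x ∈ Q i, σ i x = x) (l : List κ) :
    ∀ g ∈ Γ, ∀ E : Set Ω, (∀ x ∈ reflSet σ l E, g x = x) →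
      ∃ h ∈ Γ, (∀ x ∈ E, h x = x) ∧ ∀ i ∈ l, ∀ x ∈ Q i, h x = g x := by
  induction l with
  | nil => intro g hg E _; exact ⟨1, Γ.one_mem, fun _ _ => rfl, by simp⟩
  | cons i l ih =>
    intro g hg E hE
    obtain ⟨h, hh, hfix, hag⟩ := ih g hg (E ∪ σ i '' E) fun x hx => hE x (Or.inl hx)
    have hk : h * g⁻¹ ∈ Γ := Γ.mul_mem hh (Γ.inv_mem hg)
    refine ⟨((σ i)⁻¹ * (h * g⁻¹) * σ i)⁻¹ * h, ?_, ?_, ?_⟩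
    · exact Γ.mul_mem (Γ.inv_mem (Γ.mul_mem (Γ.mul_mem (Γ.inv_mem (hσΓ i)) hk) (hσΓ i))) hh
    · intro x hx
      have e1 : h x = x := hfix x (Or.inl hx)
      have e2 : h (σ i x) = σ i x := hfix _ (Or.inr ⟨x, hx, rfl⟩)
      have e3 : g (σ i x) = σ i x := hE _ (Or.inr ⟨x, hx, rfl⟩)
      rw [Equiv.Perm.mul_apply, e1, Equiv.Perm.inv_eq_iff_eq]
      simp only [Equiv.Perm.mul_apply]
      have e4 : g⁻¹ (σ i x) = σ i x := by rw [Equiv.Perm.inv_eq_iff_eq, e3]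
      rw [e4, e2, perm_inv_app]
    · intro j hj x hx
      rw [Equiv.Perm.mul_apply, Equiv.Perm.inv_eq_iff_eq]
      simp only [Equiv.Perm.mul_apply]
      rcases List.mem_cons.1 hj with rfl | hj
      · have e1 := hσ j (g x) (hΓ g hg j x hx)
        rw [e1, perm_inv_app, eq_comm, Equiv.Perm.inv_eq_iff_eq]
        exact (hσ j _ (hΓ h hh j x hx)).symm
      · have e1 : g⁻¹ (σ i (g x)) ∈ Q j :=
          hΓ _ (Γ.inv_mem hg) j _ (hΓ _ (hσΓ i) j _ (hΓ g hg j x hx))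
        rw [hag j hj _ e1, perm_app_inv, perm_inv_app, hag j hj x hx]

end Reflect


section Isolation

lemma transport {C : Set (QMObj.{u} L)} (hC : IsQMClass C) {H H' : QMObj.{u} L} (hH : H ∈ C)
    (hH' : H' ∈ C) {p : Set (H.carrier × H'.carrier)} (hp : PE (L := L) p) {ι : Type*}
    {a : ι → H.carrier} {b : ι → H'.carrier} {J : Set ι} (hJ : ∀ k ∈ J, (a k, b k) ∈ p)
    {y : H.carrier} {y' : H'.carrier} (hy : (y, y') ∈ p) :
    y ∈ H.cl (a '' J) ↔ y' ∈ H'.cl (b '' J) := by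
  have := cle hC hH hH' hp (q := (fun k => (a k, b k)) '' J)
    (by rintro _ ⟨k, hk, rfl⟩; exact hJ k hk) hy
  have e1 : pdom ((fun k => (a k, b k)) '' J) = a '' J := by
    simp [pdom, image_image]
  have e2 : pimg ((fun k => (a k, b k)) '' J) = b '' J := by
    simp [pimg, image_image]
  rwa [e1, e2] at this

/-- The graph of a permutation of a subset. -/
def permGraph {α : Type*} {N : Set α} (e : Equiv.Perm N) : Set (α × α) :=
  Set.range fun x : N => ((x : α), (e x : α))

lemma mem_permGraph {α : Type*} {N : Set α} {e : Equiv.Perm N} (x : N) :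
    ((x : α), (e x : α)) ∈ permGraph e := ⟨x, rfl⟩

lemma permGraph_eq {α : Type*} {N : Set α} {e : Equiv.Perm N} {x y : N}
    (h : ((x : α), (y : α)) ∈ permGraph e) : e x = y := by
  obtain ⟨z, hz⟩ := h
  simp only [Prod.mk.injEq] at hz
  have h1 : z = x := Subtype.ext hz.1
  subst h1
  exact Subtype.ext hz.2

/-- The group of automorphisms of a subset preserving given subsets. -/
def autGroup {H : Type u} [L.Structure H] {N : Set H} {κ : Type*} (Q : κ → Set N) :
    Subgroup (Equiv.Perm N) where
  carrier := {e | PE (L := L) (permGraph e) ∧ ∀ j, ∀ x, x ∈ Q j ↔ e x ∈ Q j}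
  mul_mem' := by
    rintro a b ⟨ha, ha'⟩ ⟨hb, hb'⟩
    refine ⟨(PE.comp hb ha).mono ?_, fun j x => ?_⟩
    · rintro _ ⟨x, rfl⟩
      exact ⟨(b x : H), mem_permGraph x, mem_permGraph (b x)⟩
    · rw [Equiv.Perm.mul_apply, ← ha', ← hb']
  one_mem' := by
    refine ⟨(PE.diag N).mono ?_, fun j x => Iff.rfl⟩
    rintro _ ⟨x, rfl⟩
    exact ⟨rfl, x.2⟩
  inv_mem' := by
    rintro a ⟨ha, ha'⟩
    refine ⟨(PE.symm ha).mono ?_, fun j x => ?_⟩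
    · rintro _ ⟨x, rfl⟩
      have := mem_permGraph (e := a) (a⁻¹ x)
      rw [perm_app_inv] at this
      exact this
    · rw [ha' j (a⁻¹ x), perm_app_inv]

lemma mem_autGroup {H : Type u} [L.Structure H] {N : Set H} {κ : Type*} (Q : κ → Set N)
    (e : Equiv.Perm N) : e ∈ autGroup (L := L) Q ↔
      PE (L := L) (permGraph e) ∧ ∀ j, ∀ x, x ∈ Q j ↔ e x ∈ Q j := Iff.rfl

lemma PE.toPerm {H : Type u} [L.Structure H] {N : Set H} {p : Set (H × H)} (hp : PE (L := L) p)
    (hd : pdom p = N) (hi : pimg p = N) :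
    ∃ e : Equiv.Perm N, permGraph e = p := by
  have h1 : ∀ a : N, ∃ b : N, ((a : H), (b : H)) ∈ p := fun a => by
    obtain ⟨b, hb⟩ := mem_pdom.1 (show (a : H) ∈ pdom p by rw [hd]; exact a.2)
    exact ⟨⟨b, hi ▸ mem_pimg.2 ⟨_, hb⟩⟩, hb⟩
  have h2 : ∀ b : N, ∃ a : N, ((a : H), (b : H)) ∈ p := fun b => by
    obtain ⟨a, ha⟩ := mem_pimg.1 (show (b : H) ∈ pimg p by rw [hi]; exact b.2)
    exact ⟨⟨a, hd ▸ mem_pdom.2 ⟨_, ha⟩⟩, ha⟩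
  choose f hf using h1
  choose g hg using h2
  refine ⟨⟨f, g, fun a => ?_, fun b => ?_⟩, ?_⟩
  · exact Subtype.ext ((hp.eq_iff (hg (f a)) (hf a)).2 rfl)
  · exact Subtype.ext ((hp.eq_iff (hf (g b)) (hg b)).1 rfl)
  · apply Subset.antisymm
    · rintro _ ⟨x, rfl⟩
      exact hf x
    · rintro ⟨a, b⟩ hab
      have ha : a ∈ N := hd ▸ mem_pdom.2 ⟨_, hab⟩
      refine ⟨⟨a, ha⟩, ?_⟩
      have := (hp.eq_iff hab (hf ⟨a, ha⟩)).1 rfl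
      simp [this]

lemma IndepOn.comp {α ι : Type*} {cl : Set α → Set α} {a : ι → α} (h : IndepOn cl a Set.univ)
    {τ : ι → ι} {I : Set ι} (hτ : InjOn τ I) : IndepOn cl (a ∘ τ) I := by
  intro i hi J hJ hiJ
  rw [image_comp]
  refine h (τ i) (mem_univ _) _ (subset_univ _) ?_
  rintro ⟨j, hj, hji⟩
  exact hiJ (hτ (hJ hj) hi hji ▸ hj)

lemma IndepOn.mono {α ι : Type*} {cl : Set α → Set α} {a : ι → α} (h : IndepOn cl a Set.univ)
    (I : Set ι) : IndepOn cl a I := h.comp (τ := id) (injOn_id I)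

lemma mk_perm {C : Set (QMObj.{u} L)} (hC : IsQMClass C) {H : QMObj.{u} L} (hH : H ∈ C)
    {ι : Type*} {a : ι → H.carrier} (ha : IndepOn H.cl a Set.univ) {T I0 : Set ι}
    (hT : T.Countable) (hI0 : I0 ⊆ T) {τ : ι → ι} (hτ : InjOn τ T) (hτT : τ '' T = T)
    {p : Set (H.carrier × H.carrier)} (hp : PE (L := L) p) (hpd : pdom p = H.cl (a '' I0))
    (hpi : pimg p = H.cl (a '' (τ '' I0))) (hp0 : ∀ i ∈ I0, (a i, a (τ i)) ∈ p) :
    ∃ e : Equiv.Perm (H.cl (a '' T)), PE (L := L) (permGraph e) ∧ p ⊆ permGraph e ∧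
      ∀ k ∈ T, (a k, a (τ k)) ∈ permGraph e := by
  obtain ⟨p', hp', hpp', hd, hi, hk⟩ := extend_indep hC hH hH a (a ∘ τ) hI0 hT (ha.mono T)
    (ha.comp hτ) hp hpd (by rwa [image_comp]) hp0
  rw [image_comp, hτT] at hi
  obtain ⟨e, he⟩ := hp'.toPerm hd hi
  refine ⟨e, he ▸ hp', he ▸ hpp', he ▸ hk⟩

lemma exists_inj {ι : Type*} {A S : Set ι} (hA : A.Finite) (hS : S.Infinite) :
    ∃ f : ι → ι, (∀ x ∈ A, f x ∈ S) ∧ InjOn f A := by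
  have : Nonempty ι := ⟨hS.nonempty.some⟩
  obtain ⟨f, h1, h2⟩ := hA.exists_injOn_of_encard_le (t := S) (by rw [hS.encard_eq]; exact le_top)
  exact ⟨f, fun x hx => h1 hx, h2⟩

lemma isolation {C : Set (QMObj.{u} L)} (hC : IsQMClass C) {H : QMObj.{u} L} (hH : H ∈ C)
    {ι : Type*} {a : ι → H.carrier} (ha : IndepOn H.cl a Set.univ) {s0 : Set ι}
    (hs0 : s0.Infinite) (hs0c : s0.Countable) (X : Finset ι) (hXs : ∀ x ∈ X, x ∉ s0)
    {E : Set H.carrier} (hE : E.Finite) (hEN : E ⊆ H.cl (a '' (s0 ∪ X))) :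
    ∃ C0 : Set H.carrier, C0.Finite ∧
      (∀ c ∈ C0, c ∈ a '' (s0 ∪ X) ∨ ∃ x ∈ X, c ∈ H.cl (a '' (s0 ∪ (↑X \ {x})))) ∧
      E ⊆ H.cl C0 ∧
      ∀ q : Set (H.carrier × H.carrier), PE (L := L) q → (∀ c ∈ C0, (c, c) ∈ q) →
        ∀ c : Set H.carrier, c.Finite →
          (∀ y ∈ c, y ∈ a '' X ∨ ∃ x ∈ X, y ∈ H.cl (a '' {x}ᶜ)) →
          PE (L := L) ({p | p ∈ q ∧ p.1 ∈ E} ∪ pdiag c) := by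
  classical
  have pg := hC.pregeom H hH
  set T : Set ι := s0 ∪ X with hTdef
  have hTc : T.Countable := hs0c.union X.finite_toSet.countable
  have hXT : (X : Set ι) ⊆ T := subset_union_right
  set E1 : Set H.carrier := E ∪ a '' X with hE1
  have hE1f : E1.Finite := hE.union (X.finite_toSet.image _)
  have hE1N : E1 ⊆ H.cl (a '' T) :=
    union_subset hEN ((image_mono hXT).trans (pg.subset_cl _))
  obtain ⟨D', hD'T, hD'f, hD'⟩ := pg.finite_support a T hE1f hE1N
  obtain ⟨D, hDdef⟩ : ∃ D, D = D' ∪ (X : Set ι) := ⟨_, rfl⟩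
  have hDT : D ⊆ T := hDdef ▸ union_subset hD'T hXT
  have hDf : D.Finite := hDdef ▸ hD'f.union X.finite_toSet
  have hXD : (X : Set ι) ⊆ D := hDdef ▸ subset_union_right
  have hE1D : E1 ⊆ H.cl (a '' D) :=
    hD'.trans (pg.mono (image_mono (hDdef ▸ subset_union_left)))
  obtain ⟨pr, hpr, hprinj⟩ := exists_inj X.finite_toSet (hs0.diff hDf)
  have hprT : ∀ x ∈ X, pr x ∈ T := fun x hx => Or.inl (hpr x hx).1
  have hprD : ∀ x ∈ X, pr x ∉ D := fun x hx => (hpr x hx).2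
  have hprX : ∀ x ∈ X, ∀ y ∈ X, pr x ≠ y := fun x hx y hy h =>
    hprD x hx (hXD (h ▸ hy))
  -- the reflections
  have hswT : ∀ i ∈ X, ∀ k ∈ T, Equiv.swap i (pr i) k ∈ T := by
    intro i hi k hk
    rw [Equiv.swap_apply_def]
    split_ifs
    · exact hprT i hi
    · exact hXT hi
    · exact hk
  have himg : ∀ i : ι, ∀ J : Set ι, (∀ k ∈ J, Equiv.swap i (pr i) k ∈ J) →
      Equiv.swap i (pr i) '' J = J := by
    intro i J hJ
    apply Subset.antisymm
    · rintro _ ⟨k, hk, rfl⟩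
      exact hJ k hk
    · intro k hk
      exact ⟨_, hJ k hk, Equiv.swap_apply_self _ _ _⟩
  have hσ : ∀ i : X, ∃ e : Equiv.Perm (H.cl (a '' T)), PE (L := L) (permGraph e) ∧
      pdiag (H.cl (a '' (T \ {i.1, pr i.1}))) ⊆ permGraph e ∧
      ∀ k ∈ T, (a k, a (Equiv.swap i.1 (pr i.1) k)) ∈ permGraph e := by
    rintro ⟨i, hi⟩
    have hfix : ∀ k ∈ T \ {i, pr i}, Equiv.swap i (pr i) k = k := by
      rintro k ⟨hk, hk2⟩
      simp only [mem_insert_iff, mem_singleton_iff, not_or] at hk2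
      exact Equiv.swap_apply_of_ne_of_ne hk2.1 hk2.2
    refine mk_perm hC hH ha hTc (I0 := T \ {i, pr i}) diff_subset
      (Equiv.injective _).injOn (himg i T (hswT i hi)) (PE.diag _) (pdom_diag _) ?_ ?_
    · rw [pimg_diag, himg i _ fun k hk => by rw [hfix k hk]; exact hk]
    · intro k hk
      rw [hfix k hk]
      exact ⟨rfl, pg.subset_cl _ ⟨k, hk, rfl⟩⟩
  choose σ hσPE hσfix hσa using hσ
  let Q : X → Set (H.cl (a '' T)) := fun i => {x | x.1 ∈ H.cl (a '' (T \ {i.1, pr i.1}))}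
  let P : X → Set (H.cl (a '' T)) := fun i => {x | x.1 ∈ H.cl (a '' (T \ {pr i.1}))}
  let O : X → Set (H.cl (a '' T)) := fun i => {x | x.1 ∈ H.cl (a '' (T \ {i.1}))}
  have htr : ∀ (i : X) (J J' : Set ι), J ⊆ T → (∀ k ∈ J, Equiv.swap i.1 (pr i.1) k ∈ J') →
      ∀ x : H.cl (a '' T), x.1 ∈ H.cl (a '' J) → (σ i x).1 ∈ H.cl (a '' J') := by
    intro i J J' hJ hJ' x hx
    have := (transport hC hH hH (hσPE i) (fun k hk => hσa i k (hJ hk)) (mem_permGraph x)).1 hx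
    refine pg.mono ?_ this
    rintro _ ⟨k, hk, rfl⟩
    exact ⟨_, hJ' k hk, rfl⟩
  have hprne : ∀ i j : X, i ≠ j → pr i.1 ≠ pr j.1 := fun i j hij h =>
    hij (Subtype.ext (hprinj i.2 j.2 h))
  have h1 : ∀ i, ∀ x ∈ P i, σ i x ∈ O i := by
    intro i x hx
    refine htr i _ _ diff_subset ?_ x hx
    rintro k ⟨hk, hk2⟩
    refine ⟨hswT i.1 i.2 k hk, fun h => hk2 ?_⟩
    rw [mem_singleton_iff] at h ⊢
    have h' := congrArg (Equiv.swap i.1 (pr i.1)) h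
    rwa [Equiv.swap_apply_self, Equiv.swap_apply_left] at h'
  have h2 : ∀ i j, i ≠ j → ∀ x ∈ P j, σ i x ∈ P j := by
    intro i j hij x hx
    refine htr i _ _ diff_subset ?_ x hx
    rintro k ⟨hk, hk2⟩
    refine ⟨hswT i.1 i.2 k hk, fun h => hk2 ?_⟩
    rw [mem_singleton_iff] at h ⊢
    rw [← Equiv.swap_apply_of_ne_of_ne (hprX j.1 j.2 i.1 i.2) (hprne j i hij.symm), ← h,
      Equiv.swap_apply_self]
  have h3 : ∀ i, σ i ∈ autGroup (L := L) Q := by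
    intro i
    refine ⟨hσPE i, fun j x => ?_⟩
    have hJ : Equiv.swap i.1 (pr i.1) '' (T \ {j.1, pr j.1}) = T \ {j.1, pr j.1} := by
      apply himg
      rintro k ⟨hk, hk2⟩
      refine ⟨hswT i.1 i.2 k hk, ?_⟩
      simp only [mem_insert_iff, mem_singleton_iff, not_or] at hk2 ⊢
      by_cases hij : i = j
      · subst hij
        rw [Equiv.swap_apply_of_ne_of_ne hk2.1 hk2.2]
        exact hk2
      · have hij' : i.1 ≠ j.1 := fun h => hij (Subtype.ext h)
        have e1 := hprX i.1 i.2 j.1 j.2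
        have e2 := hprX j.1 j.2 i.1 i.2
        have e3 := hprne i j hij
        rw [Equiv.swap_apply_def]
        split_ifs
        · exact ⟨e1, e3⟩
        · exact ⟨hij', e2.symm⟩
        · exact hk2
    have := transport hC hH hH (hσPE i) (J := T \ {j.1, pr j.1}) (fun k hk => hσa i k hk.1)
      (mem_permGraph x)
    have e : (fun k => a (Equiv.swap i.1 (pr i.1) k)) '' (T \ {j.1, pr j.1})
        = a '' (T \ {j.1, pr j.1}) := by
      conv_rhs => rw [← hJ, image_image]
    rw [e] at this
    exact this
  have h4 : ∀ i, ∀ x ∈ Q i, σ i x = x := by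
    intro i x hx
    exact permGraph_eq (hσfix i ⟨rfl, hx⟩)
  set EN : Set (H.cl (a '' T)) := {x | x.1 ∈ E1} with hENdef
  have hENf : EN.Finite := hE1f.preimage Subtype.val_injective.injOn
  obtain ⟨l, hl, hlm⟩ : ∃ l : List X, l.Nodup ∧ ∀ i, i ∈ l :=
    ⟨Finset.univ.toList, Finset.nodup_toList _, fun i => by simp⟩
  have hF := reflSet_sub σ P O h1 h2 l hl EN (by
    intro e he j _
    refine pg.mono (image_mono ?_) (hE1D he)
    intro k hk
    exact ⟨hDT hk, fun h => hprD j.1 j.2 (by rw [← mem_singleton_iff.1 h]; exact hk)⟩)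
  have hC1f : (Subtype.val '' reflSet σ l EN).Finite := (reflSet_finite σ l EN hENf).image _
  obtain ⟨D1', hD1'T, hD1'f, hD1'⟩ := pg.finite_support a T hC1f
    (by rintro _ ⟨x, -, rfl⟩; exact x.2)
  obtain ⟨D1, hD1def⟩ : ∃ D1, D1 = D1' ∪ D := ⟨_, rfl⟩
  have hD1T : D1 ⊆ T := hD1def ▸ union_subset hD1'T hDT
  have hD1f : D1.Finite := hD1def ▸ hD1'f.union hDf
  have hDD1 : D ⊆ D1 := hD1def ▸ subset_union_right
  have hC1D1 : Subtype.val '' reflSet σ l EN ⊆ H.cl (a '' D1) :=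
    hD1'.trans (pg.mono (image_mono (hD1def ▸ subset_union_left)))
  have hC0D1 : a '' D1 ∪ Subtype.val '' reflSet σ l EN ⊆ H.cl (a '' D1) :=
    union_subset (pg.subset_cl _) hC1D1
  have hEC0 : E ⊆ H.cl (a '' D1 ∪ Subtype.val '' reflSet σ l EN) := by
    refine subset_union_left.trans (hE1D.trans (pg.mono ?_))
    exact (image_mono hDD1).trans subset_union_left
  refine ⟨a '' D1 ∪ Subtype.val '' reflSet σ l EN, (hD1f.image _).union hC1f, ?_, hEC0, ?_⟩
  · rintro c (hc | ⟨x, hx, rfl⟩)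
    · exact Or.inl (image_mono hD1T hc)
    · obtain ⟨j, -, hj⟩ := hF x hx
      refine Or.inr ⟨j.1, j.2, pg.mono (image_mono ?_) hj⟩
      rintro k ⟨hk | hk, hk2⟩
      · exact Or.inl hk
      · exact Or.inr ⟨hk, hk2⟩
  set C0 := a '' D1 ∪ Subtype.val '' reflSet σ l EN with hC0
  have hC0f : C0.Finite := (hD1f.image _).union hC1f
  intro q hq hqC0 c hcf hc
  set q1 : Set (H.carrier × H.carrier) := {p | p ∈ q ∧ p.1 ∈ E ∪ C0} with hq1
  have hq1q : q1 ⊆ q := fun p hp => hp.1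
  have hq1PE : PE (L := L) q1 := hq.mono hq1q
  have hdiag : pdiag C0 ⊆ q1 := by
    rintro ⟨x, y⟩ ⟨hxy, hx⟩
    simp only at hxy hx
    subst hxy
    exact ⟨hqC0 x hx, Or.inr hx⟩
  have hq1f : q1.Finite := by
    refine Set.Finite.of_finite_image (f := Prod.fst) ((hE.union hC0f).subset ?_) ?_
    · rintro _ ⟨p, hp, rfl⟩
      exact hp.2
    · rintro ⟨x, x'⟩ hx ⟨y, y'⟩ hy hxy
      simp only at hxy
      have := (hq1PE.eq_iff hx hy).1 hxy
      rw [hxy, this]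
  have hclC0 : H.cl C0 = H.cl (a '' D1) :=
    Subset.antisymm (pg.cl_le hC0D1) (pg.mono subset_union_left)
  have hd1 : H.cl (pdom q1) = H.cl (a '' D1) := by
    rw [← hclC0]
    apply Subset.antisymm
    · apply pg.cl_le
      rintro _ ⟨p, hp, rfl⟩
      rcases hp.2 with h | h
      · exact hEC0 h
      · exact pg.subset_cl _ h
    · apply pg.mono
      have := pdom_mono hdiag
      rwa [pdom_diag] at this
  have hi1 : H.cl (pimg q1) = H.cl (a '' D1) := by
    rw [← hclC0]
    apply Subset.antisymm
    · apply pg.cl_le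
      rintro _ ⟨p, hp, rfl⟩
      have := cle hC hH hH hq1PE hdiag (y := p.1) (y' := p.2) hp
      rw [pdom_diag, pimg_diag] at this
      rw [← this]
      rcases hp.2 with h | h
      · exact hEC0 h
      · exact pg.subset_cl _ h
    · apply pg.mono
      have := pimg_mono hdiag
      rwa [pimg_diag] at this
  obtain ⟨p0, hp0, hqp0, hp0d, hp0i⟩ := extend_cl hC hH hH ∅ q1 (Or.inr (by simp [pdom]))
    (Or.inr (by simp [pimg])) hq1f (by rwa [empty_union])
  rw [empty_union] at hqp0 hp0d hp0i
  rw [hd1] at hp0d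
  rw [hi1] at hp0i
  obtain ⟨g, hg, hp0g, hga⟩ := mk_perm hC hH ha hTc hD1T (τ := id) (injOn_id _) (image_id _) hp0
    hp0d (by rwa [image_id]) (fun i hi => hqp0 (hdiag ⟨rfl, Or.inl ⟨i, hi, rfl⟩⟩))
  have hgΓ : g ∈ autGroup (L := L) Q := by
    refine ⟨hg, fun j x => ?_⟩
    exact transport hC hH hH hg (J := T \ {j.1, pr j.1}) (fun k hk => hga k hk.1)
      (mem_permGraph x)
  obtain ⟨h, hhΓ, hhE, hhQ⟩ := reflect_core Q σ (autGroup (L := L) Q)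
    (fun g hg j x hx => (hg.2 j x).1 hx) h3 h4 l g hgΓ EN (by
      intro x hx
      exact permGraph_eq (hp0g (hqp0 (hdiag ⟨rfl, Or.inr ⟨x, hx, rfl⟩⟩))))
  have hkΓ : g * h⁻¹ ∈ autGroup (L := L) Q := mul_mem hgΓ (inv_mem hhΓ)
  obtain ⟨k, hk⟩ : ∃ k, k = g * h⁻¹ := ⟨_, rfl⟩
  rw [← hk] at hkΓ
  have hkE : ∀ x ∈ EN, k x = g x := by
    intro x hx
    have : h⁻¹ x = x := by rw [Equiv.Perm.inv_eq_iff_eq, hhE x hx]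
    rw [hk, Equiv.Perm.mul_apply, this]
  have hkQ : ∀ j, ∀ x ∈ Q j, k x = x := by
    intro j x hx
    have hx' : h⁻¹ x ∈ Q j := ((inv_mem hhΓ : h⁻¹ ∈ autGroup (L := L) Q).2 j x).1 hx
    rw [hk, Equiv.Perm.mul_apply, ← hhQ j (hlm j) _ hx', perm_app_inv]
  -- supports of c
  have hsup : ∀ y ∈ c, ∃ Dy : Set ι, Dy.Finite ∧
      (y ∈ a '' X ∨ ∃ x ∈ X, x ∉ Dy ∧ y ∈ H.cl (a '' Dy)) := by
    intro y hy
    rcases hc y hy with h | ⟨x, hx, hxy⟩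
    · exact ⟨∅, finite_empty, Or.inl h⟩
    · obtain ⟨Dy, hDy, hDyf, hyD⟩ := pg.finite_support a _ (finite_singleton y)
        (singleton_subset_iff.2 hxy)
      exact ⟨Dy, hDyf, Or.inr ⟨x, hx, fun h => hDy h rfl, hyD rfl⟩⟩
  choose! Dy hDyf hDy using hsup
  obtain ⟨D2, hD2⟩ : ∃ D2, D2 = D ∪ ⋃ y ∈ c, Dy y := ⟨_, rfl⟩
  have hDD2 : D ⊆ D2 := hD2 ▸ subset_union_left
  have hD2f : D2.Finite := hD2 ▸ hDf.union (hcf.biUnion hDyf)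
  have hDyD2 : ∀ y ∈ c, Dy y ⊆ D2 := fun y hy =>
    hD2 ▸ (subset_biUnion_of_mem hy).trans subset_union_right
  obtain ⟨f, hf, hfinj⟩ := exists_inj hD2f (hs0.diff (hDf.union (X.finite_toSet.image pr)))
  let π : ι → ι := fun i => if i ∈ D then i else f i
  have hπD : ∀ i ∈ D, π i = i := fun i hi => if_pos hi
  have hπD' : ∀ i, i ∉ D → π i = f i := fun i hi => if_neg hi
  have hπinj : InjOn π D2 := by
    intro i hi j hj hij
    by_cases h1 : i ∈ D <;> by_cases h2 : j ∈ D
    · rwa [hπD i h1, hπD j h2] at hij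
    · rw [hπD i h1, hπD' j h2] at hij
      exact absurd (Or.inl (hij ▸ h1)) (hf j hj).2
    · rw [hπD' i h1, hπD j h2] at hij
      exact absurd (Or.inl (hij ▸ h2)) (hf i hi).2
    · rw [hπD' i h1, hπD' j h2] at hij
      exact hfinj hi hj hij
  have himD : (a ∘ π) '' D = a '' D := by
    apply image_congr
    intro i hi
    simp [hπD i hi]
  obtain ⟨pp, hpp, hdpp, hppd, hppi, hppa⟩ := extend_indep hC hH hH a (a ∘ π) hDD2
    hD2f.countable (ha.mono _) (ha.comp hπinj) (PE.diag (H.cl (a '' D))) (pdom_diag _)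
    (by rw [pimg_diag, himD]) (by
      intro i hi
      simp only [Function.comp, hπD i hi]
      exact ⟨rfl, pg.subset_cl _ ⟨i, hi, rfl⟩⟩)
  refine (hpp.comp (PE.comp hkΓ.1 hpp.symm)).mono ?_
  rintro ⟨y, y'⟩ (⟨hyq, hyE⟩ | ⟨hyy, hyc⟩)
  · have hyN : y ∈ H.cl (a '' T) := hEN hyE
    have hyD : y ∈ H.cl (a '' D) := hE1D (Or.inl hyE)
    have hyg : (y, y') ∈ permGraph g := hp0g (hqp0 ⟨hyq, Or.inl hyE⟩)
    have hyD' : y' ∈ H.cl (a '' D) :=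
      (transport hC hH hH hg (J := D) (fun k hk => hga k (hDT hk)) hyg).1 hyD
    have hyk : (y, y') ∈ permGraph k := by
      have e1 : (g ⟨y, hyN⟩).1 = y' := by
        have hyN' : y' ∈ H.cl (a '' T) := pg.mono (image_mono hDT) hyD'
        exact congrArg Subtype.val (permGraph_eq (x := ⟨y, hyN⟩) (y := ⟨y', hyN'⟩) hyg)
      refine ⟨⟨y, hyN⟩, ?_⟩
      simp only
      rw [hkE ⟨y, hyN⟩ (Or.inl hyE), e1]
    exact ⟨y, hdpp ⟨rfl, hyD⟩, y', hyk, hdpp ⟨rfl, hyD'⟩⟩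
  · simp only at hyy hyc
    subst hyy
    rcases hDy y hyc with ⟨x, hx, rfl⟩ | ⟨x, hx, hxD, hy⟩
    · have hxD : a x ∈ H.cl (a '' D) := pg.subset_cl _ ⟨x, hXD hx, rfl⟩
      have hxN : a x ∈ H.cl (a '' T) := pg.subset_cl _ ⟨x, hXT hx, rfl⟩
      refine ⟨a x, hdpp ⟨rfl, hxD⟩, a x, ?_, hdpp ⟨rfl, hxD⟩⟩
      refine ⟨⟨a x, hxN⟩, ?_⟩
      simp only
      rw [hkE ⟨a x, hxN⟩ (Or.inr ⟨x, hx, rfl⟩)]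
      have := permGraph_eq (x := ⟨a x, hxN⟩) (y := ⟨a x, hxN⟩) (hga x (hXT hx))
      rw [this]
    · have hyd : y ∈ pdom pp := hppd ▸ pg.mono (image_mono (hDyD2 y hyc)) hy
      obtain ⟨y1, hy1⟩ := mem_pdom.1 hyd
      have hy2 := (transport hC hH hH hpp (J := Dy y) (fun k hk => hppa k (hDyD2 y hyc hk)) hy1).1 hy
      have hy3 : y1 ∈ H.cl (a '' (T \ {x, pr x})) := by
        refine pg.mono ?_ hy2
        rintro _ ⟨i, hi, rfl⟩
        refine ⟨π i, ?_, rfl⟩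
        by_cases hiD : i ∈ D
        · rw [hπD i hiD]
          refine ⟨hDT hiD, ?_⟩
          rintro (rfl | h)
          · exact hxD hi
          · rw [mem_singleton_iff] at h
            exact hprD x hx (h ▸ hiD)
        · rw [hπD' i hiD]
          have := hf i (hDyD2 y hyc hi)
          refine ⟨Or.inl this.1, ?_⟩
          rintro (h | h)
          · exact this.2 (Or.inl (h ▸ hXD hx))
          · rw [mem_singleton_iff] at h
            exact this.2 (Or.inr ⟨x, hx, h.symm⟩)
      have hy4 : y1 ∈ H.cl (a '' T) := pg.mono (image_mono diff_subset) hy3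
      refine ⟨y1, hy1, y1, ?_, hy1⟩
      refine ⟨⟨y1, hy4⟩, ?_⟩
      simp only
      rw [hkQ ⟨x, hx⟩ ⟨y1, hy4⟩ hy3]

end Isolation


section Final

lemma ext_point {C : Set (QMObj.{u} L)} (hC : IsQMClass C)
    {H H' : QMObj.{u} L} (hH : H ∈ C) (hH' : H' ∈ C)
    {ι : Type*} {b : ι → H.carrier} (hb : IndepOn H.cl b Set.univ) {s0 : Set ι}
    (hs0 : s0.Infinite) (hs0c : s0.Countable) (X : Finset ι) (hXs : ∀ x ∈ X, x ∉ s0)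
    {f1 f2 : Set (H.carrier × H'.carrier)} (hf : PE (L := L) (f1 ∪ f2))
    (hf1 : ∀ p ∈ f1, p.1 ∈ b '' X ∨ (∃ x ∈ X, p.1 ∈ H.cl (b '' {x}ᶜ)))
    (hf2 : f2.Finite) (hf2d : pdom f2 ⊆ H.cl (b '' (s0 ∪ X)))
    (hcr : ∀ c, (c ∈ b '' (s0 ∪ X) ∨ ∃ x ∈ X, c ∈ H.cl (b '' (s0 ∪ (↑X \ {x})))) →
      c ∈ pdom (f1 ∪ f2))
    {a : H.carrier} (ha : a ∈ H.cl (b '' (s0 ∪ X))) :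
    ∃ a' : H'.carrier, PE (L := L) (f1 ∪ f2 ∪ {(a, a')}) := by
  have pg := hC.pregeom H hH
  have hE : (insert a (pdom f2)).Finite := (hf2.image _).insert _
  obtain ⟨C0, hC0, hC0c, hEC0, hiso⟩ := isolation hC hH hb hs0 hs0c X hXs hE
    (insert_subset ha hf2d)
  have hinj : Set.InjOn Prod.fst (f1 ∪ f2) := by
    rintro ⟨x, y⟩ hx ⟨x', y'⟩ hx' (h : x = x')
    exact Prod.ext h ((hf.eq_iff hx hx').1 h)
  set f0 : Set (H.carrier × H'.carrier) := {p | p ∈ f1 ∪ f2 ∧ p.1 ∈ C0} ∪ f2 with hf0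
  have f0f : f0 ⊆ f1 ∪ f2 := by
    rintro p (hp | hp)
    · exact hp.1
    · exact Or.inr hp
  have f0fin : f0.Finite := by
    refine Set.Finite.union ?_ hf2
    refine Set.Finite.of_finite_image (hC0.subset ?_) (hinj.mono fun p hp => hp.1)
    rintro _ ⟨p, hp, rfl⟩
    exact hp.2
  have C0f0 : C0 ⊆ pdom f0 := by
    intro c hc
    obtain ⟨d, hd⟩ := mem_pdom.1 (hcr c (hC0c c hc))
    exact mem_pdom.2 ⟨d, Or.inl ⟨hd, hc⟩⟩
  have hacl : a ∈ H.cl (pdom f0) := pg.mono C0f0 (hEC0 (mem_insert _ _))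
  have hemp : PE (L := L) (∅ : Set (H.carrier × H'.carrier)) := hf.mono (empty_subset _)
  have cc : CCOE H (pdom (∅ : Set (H.carrier × H'.carrier))) := Or.inr (by simp [pdom])
  have cc' : CCOE H' (pimg (∅ : Set (H.carrier × H'.carrier))) := Or.inr (by simp [pimg])
  obtain ⟨a', ha'⟩ := hC.homogeneity₂ H hH H' hH' ∅ f0 cc cc' hemp (f0fin.image _)
    (by rw [empty_union]; exact hf.mono f0f) a (pg.mono subset_union_left hacl)
  rw [empty_union] at ha'
  have hA : PE (L := L) (f0 ∪ {(a, a')}) := ha'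
  have ha'cl : a' ∈ H'.cl (pimg f0) :=
    (cle hC hH hH' hA (q := f0) subset_union_left (Or.inr rfl)).1 hacl
  refine ⟨a', PE.of_finite fun r hr hrf => ?_⟩
  set f3 : Set (H.carrier × H'.carrier) := r ∩ f1 with hf3
  have f3fin : f3.Finite := hrf.subset inter_subset_left
  have hf4 : PE (L := L) (f0 ∪ f3) :=
    hf.mono (union_subset f0f (inter_subset_right.trans subset_union_left))
  obtain ⟨a'', ha''⟩ := hom2_back hC hH hH' ∅ (f0 ∪ f3) cc cc' ((f0fin.union f3fin).image _)
    (by rwa [empty_union]) a'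
    ((hC.pregeom H' hH').mono ((pimg_mono subset_union_left).trans subset_union_left) ha'cl)
  rw [empty_union] at ha''
  have hB : PE (L := L) (f0 ∪ f3 ∪ {(a'', a')}) := ha''
  have hq := hA.comp hB.symm
  have key := hiso _ hq (by
    intro c hc
    obtain ⟨d, hd⟩ := mem_pdom.1 (C0f0 hc)
    exact ⟨d, Or.inl hd, Or.inl (Or.inl hd)⟩) (pdom f3) (f3fin.image _) (by
    rintro _ ⟨p, hp, rfl⟩
    exact hf1 p hp.2)
  refine (PE.comp key hB).mono ?_
  rintro ⟨x, y⟩ hxy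
  rcases hr hxy with (h | h) | h
  · exact ⟨x, Or.inr ⟨rfl, mem_pdom.2 ⟨y, hxy, h⟩⟩, Or.inl (Or.inr ⟨hxy, h⟩)⟩
  · refine ⟨x, Or.inl ⟨⟨y, Or.inl (Or.inr h), Or.inl (Or.inl (Or.inr h))⟩, ?_⟩,
      Or.inl (Or.inl (Or.inr h))⟩
    exact Or.inr (mem_pdom.2 ⟨y, h⟩)
  · obtain ⟨rfl, rfl⟩ := Prod.mk.inj h
    exact ⟨a'', Or.inl ⟨⟨y, Or.inr rfl, Or.inr rfl⟩, Or.inl rfl⟩, Or.inr rfl⟩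

/-- The condition on elements already treated when adding the finite set `X`. -/
def cond {α ι : Type*} (cl : Set α → Set α) (b : ι → α) (X : Finset ι) (y : α) : Prop :=
  y ∈ b '' X ∨ (∃ x ∈ X, y ∈ cl (b '' {x}ᶜ))

/-- The crown of `X`. -/
def crown {α ι : Type*} (cl : Set α → Set α) (b : ι → α) (s0 : Set ι) (X : Finset ι) (c : α) :
    Prop :=
  c ∈ b '' (s0 ∪ X) ∨ ∃ x ∈ X, c ∈ cl (b '' (s0 ∪ (↑X \ {x})))

lemma ext_big {C : Set (QMObj.{u} L)} (hC : IsQMClass C)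
    {H H' : QMObj.{u} L} (hH : H ∈ C) (hH' : H' ∈ C)
    {ι : Type*} {b : ι → H.carrier} (hb : IndepOn H.cl b Set.univ)
    {d : ι → H'.carrier} (hd : IndepOn H'.cl d Set.univ) {s0 : Set ι}
    (hs0 : s0.Infinite) (hs0c : s0.Countable) (X : Finset ι) (hXs : ∀ x ∈ X, x ∉ s0)
    {f : Set (H.carrier × H'.carrier)} (hf : PE (L := L) f)
    (hf1 : ∀ p ∈ f, cond H.cl b X p.1) (hf1' : ∀ p ∈ f, cond H'.cl d X p.2)
    (hcr : ∀ c, crown H.cl b s0 X c → c ∈ pdom f)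
    (hcr' : ∀ c, crown H'.cl d s0 X c → c ∈ pimg f)
    (hbd : ∀ i, (b i, d i) ∈ f) :
    ∃ f' : Set (H.carrier × H'.carrier), PE (L := L) f' ∧ f ⊆ f' ∧
      H.cl (b '' (s0 ∪ X)) ⊆ pdom f' ∧ H'.cl (d '' (s0 ∪ X)) ⊆ pimg f' ∧
      ∀ p ∈ f', p ∈ f ∨ (p.1 ∈ H.cl (b '' (s0 ∪ X)) ∧ p.2 ∈ H'.cl (d '' (s0 ∪ X))) := by
  have cT : (s0 ∪ (X : Set ι)).Countable := hs0c.union X.finite_toSet.countable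
  have cN : (H.cl (b '' (s0 ∪ X))).Countable :=
    (hC.pregeom H hH).countable_cl (hC.cl_finite_countable H hH) (cT.image _)
  have cN' : (H'.cl (d '' (s0 ∪ X))).Countable :=
    (hC.pregeom H' hH').countable_cl (hC.cl_finite_countable H' hH') (cT.image _)
  have := cN.to_subtype
  have := cN'.to_subtype
  obtain ⟨s, hs, hm, hP, hdone⟩ := chain_construct
    (K := (H.cl (b '' (s0 ∪ X))) ⊕ (H'.cl (d '' (s0 ∪ X))))
    (fun r : Set (H.carrier × H'.carrier) => r.Finite ∧ PE (L := L) (f ∪ r) ∧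
      ∀ p ∈ r, p.1 ∈ H.cl (b '' (s0 ∪ X)) ∧ p.2 ∈ H'.cl (d '' (s0 ∪ X)))
    (fun k r => Sum.elim (fun x : H.cl (b '' (s0 ∪ X)) => (x : H.carrier) ∈ pdom r)
      (fun y : H'.cl (d '' (s0 ∪ X)) => (y : H'.carrier) ∈ pimg r) k)
    (by
      rintro (⟨x, hx⟩ | ⟨y, hy⟩) r ⟨hr1, hr2, hr3⟩
      · obtain ⟨y, hy⟩ := ext_point hC hH hH' hb hs0 hs0c X hXs hr2 hf1 hr1
          (by rintro _ ⟨p, hp, rfl⟩; exact (hr3 p hp).1)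
          (fun c hc => pdom_mono subset_union_left (hcr c hc)) hx
        refine ⟨r ∪ {(x, y)}, subset_union_left, ⟨hr1.union (finite_singleton _), ?_, ?_⟩, ?_⟩
        · rwa [← union_assoc]
        · rintro p (hp | hp)
          · exact hr3 p hp
          · rw [hp]
            exact ⟨hx, (transport hC hH hH' hy (fun k _ => Or.inl (Or.inl (hbd k)))
              (Or.inr rfl)).1 hx⟩
        · exact mem_pdom.2 ⟨y, Or.inr rfl⟩
      · obtain ⟨x, hx⟩ := ext_point hC hH' hH hd hs0 hs0c X hXs
          (f1 := pinv f) (f2 := pinv r) (PE.symm hr2) (fun p hp => hf1' _ hp)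
          (hr1.preimage (f := Prod.swap) Prod.swap_injective.injOn)
          (by rw [pdom_pinv]; rintro _ ⟨p, hp, rfl⟩; exact (hr3 p hp).2)
          (fun c hc => pdom_mono subset_union_left (by rw [pdom_pinv]; exact hcr' c hc)) hy
        refine ⟨r ∪ {(x, y)}, subset_union_left, ⟨hr1.union (finite_singleton _), ?_, ?_⟩, ?_⟩
        · refine PE.mono (PE.symm (L := L) hx) ?_
          rintro ⟨x1, y1⟩ (h | h | h)
          · exact Or.inl (Or.inl h)
          · exact Or.inl (Or.inr h)
          · obtain ⟨rfl, rfl⟩ := Prod.mk.inj h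
            exact Or.inr rfl
        · rintro p (hp | hp)
          · exact hr3 p hp
          · rw [hp]
            exact ⟨(transport hC hH' hH hx (fun k _ => Or.inl (Or.inl (hbd k)))
              (Or.inr rfl)).1 hy, hy⟩
        · exact mem_pimg.2 ⟨x, Or.inr rfl⟩)
    ∅ ⟨finite_empty, by rwa [union_empty], fun p hp => hp.elim⟩
  refine ⟨⋃ n, (f ∪ s n), PE.iUnion (fun m n h => union_subset_union_right _ (hm h))
    (fun n => (hP n).2.1), ?_, ?_, ?_, ?_⟩
  · exact subset_union_left.trans (subset_iUnion (fun n => f ∪ s n) 0)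
  · intro x hx
    obtain ⟨n, hn⟩ := hdone (Sum.inl ⟨x, hx⟩)
    exact pdom_mono (subset_union_right.trans (subset_iUnion (fun n => f ∪ s n) n)) hn
  · intro x hx
    obtain ⟨n, hn⟩ := hdone (Sum.inr ⟨x, hx⟩)
    exact pimg_mono (subset_union_right.trans (subset_iUnion (fun n => f ∪ s n) n)) hn
  · intro p hp
    obtain ⟨n, hn⟩ := mem_iUnion.1 hp
    rcases hn with h | h
    · exact Or.inl h
    · exact Or.inr ((hP n).2.2 p h)

lemma IndepOn.inj {α ι : Type*} {cl : Set α → Set α} (pg : IsPregeometry cl) {b : ι → α}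
    (hb : IndepOn cl b Set.univ) : Function.Injective b := by
  intro i j hij
  by_contra hne
  refine hb i (mem_univ _) {j} (subset_univ _) hne ?_
  rw [hij]
  exact pg.subset_cl _ ⟨j, rfl, rfl⟩

lemma init_map {C : Set (QMObj.{u} L)} (hC : IsQMClass C)
    {H H' : QMObj.{u} L} (hH : H ∈ C) (hH' : H' ∈ C)
    {ι : Type*} {b : ι → H.carrier} (hb : IndepOn H.cl b Set.univ)
    {d : ι → H'.carrier} (hd : IndepOn H'.cl d Set.univ) {s0 : Set ι} (hs0c : s0.Countable) :
    ∃ p0 : Set (H.carrier × H'.carrier),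
      PE (L := L) (p0 ∪ Set.range fun i => (b i, d i)) ∧
      pdom p0 = H.cl (b '' s0) ∧ pimg p0 = H'.cl (d '' s0) := by
  have pe := pe_empty hC hH hH'
  obtain ⟨p, hp, -, hpd, hpi⟩ := extend_cl hC hH hH' ∅ ∅ (Or.inr (by simp [pdom]))
    (Or.inr (by simp [pimg])) finite_empty (by rwa [union_empty])
  obtain ⟨p0, hp0, -, hd0, hi0, h0⟩ := extend_indep hC hH hH' b d (empty_subset s0) hs0c
    (hb.mono _) (hd.mono _) hp (by rw [hpd]; simp [pdom]) (by rw [hpi]; simp [pimg])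
    (fun i hi => hi.elim)
  refine ⟨p0, PE.of_finite fun q hq hqf => ?_, hd0, hi0⟩
  set g : ι → H.carrier × H'.carrier := fun i => (b i, d i) with hg
  have ginj : Function.Injective g := fun i j h =>
    hb.inj (hC.pregeom H hH) (congrArg Prod.fst h)
  have hJ : (g ⁻¹' q).Finite := hqf.preimage ginj.injOn
  obtain ⟨p1, hp1, h01, -, -, h1⟩ := extend_indep hC hH hH' b d
    (subset_union_left : s0 ⊆ s0 ∪ g ⁻¹' q) (hs0c.union hJ.countable)
    (hb.mono _) (hd.mono _) hp0 hd0 hi0 h0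
  refine hp1.mono fun x hx => ?_
  rcases hq hx with h | ⟨i, rfl⟩
  · exact h01 h
  · exact h1 i (Or.inr hx)

lemma cond_of {α ι : Type*} {cl : Set α → Set α} (pg : IsPregeometry cl) (b : ι → α) {s0 : Set ι}
    {X Y : Finset ι} (hX : ∀ x ∈ X, x ∉ s0) (hXY : ¬ X ⊆ Y) {y : α}
    (hy : y ∈ cl (b '' (s0 ∪ Y))) : cond cl b X y := by
  obtain ⟨x, hx, hxY⟩ := Finset.not_subset.1 hXY
  refine Or.inr ⟨x, hx, pg.mono (image_mono ?_) hy⟩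
  rintro i (hi | hi) rfl
  · exact hX _ hx hi
  · exact hxY hi

lemma cond_basis {α ι : Type*} {cl : Set α → Set α} (pg : IsPregeometry cl) (b : ι → α)
    {X : Finset ι} (hX : X.Nonempty) (i : ι) : cond cl b X (b i) := by
  by_cases hi : i ∈ X
  · exact Or.inl ⟨i, hi, rfl⟩
  · obtain ⟨x, hx⟩ := hX
    refine Or.inr ⟨x, hx, pg.subset_cl _ ⟨i, ?_, rfl⟩⟩
    rintro rfl
    exact hi hx

lemma iso_of_bases {C : Set (QMObj.{u} L)} (hC : IsQMClass C)
    {H H' : QMObj.{u} L} (hH : H ∈ C) (hH' : H' ∈ C)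
    {ι : Type*} {b : ι → H.carrier} (hb : IndepOn H.cl b Set.univ)
    {d : ι → H'.carrier} (hd : IndepOn H'.cl d Set.univ)
    (hbs : H.cl (b '' Set.univ) = Set.univ) (hds : H'.cl (d '' Set.univ) = Set.univ)
    {s0 : Set ι} (hs0 : s0.Infinite) (hs0c : s0.Countable) :
    Nonempty (H.carrier ≃[L] H'.carrier) := by
  classical
  have pg := hC.pregeom H hH
  have pg' := hC.pregeom H' hH'
  obtain ⟨p0, hp0, hp0d, hp0i⟩ := init_map hC hH hH' hb hd hs0c
  set f0 : Set (H.carrier × H'.carrier) := p0 ∪ Set.range fun i => (b i, d i) with hf0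
  let N : Finset ι → Set H.carrier := fun Y => H.cl (b '' (s0 ∪ Y))
  let N' : Finset ι → Set H'.carrier := fun Y => H'.cl (d '' (s0 ∪ Y))
  let S : Set (Set (H.carrier × H'.carrier)) := {f | PE (L := L) f ∧ f0 ⊆ f ∧ ∀ p ∈ f, p ∈ f0 ∨
    ∃ Y : Finset ι, N Y ⊆ pdom f ∧ N' Y ⊆ pimg f ∧ p.1 ∈ N Y ∧ p.2 ∈ N' Y}
  obtain ⟨f, -, hmax⟩ := zorn_subset_nonempty S (by
    intro c hcS hc hne
    refine ⟨⋃₀ c, ⟨?_, ?_, ?_⟩, fun s hs => subset_sUnion_of_mem hs⟩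
    · refine PE.of_finite fun q hq hqf => ?_
      obtain ⟨s, hs, hqs⟩ := hc.directedOn.exists_mem_subset_of_finite_of_subset_sUnion hne hqf hq
      exact (hcS hs).1.mono hqs
    · obtain ⟨s, hs⟩ := hne
      exact (hcS hs).2.1.trans (subset_sUnion_of_mem hs)
    · rintro p ⟨s, hs, hps⟩
      rcases (hcS hs).2.2 p hps with h | ⟨Y, h1, h2, h3⟩
      · exact Or.inl h
      · exact Or.inr ⟨Y, h1.trans (pdom_mono (subset_sUnion_of_mem hs)),
          h2.trans (pimg_mono (subset_sUnion_of_mem hs)), h3⟩)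
    f0 ⟨hp0, Subset.rfl, fun p hp => Or.inl hp⟩
  obtain ⟨hfPE, hff0, hfY⟩ := hmax.prop
  have hbd : ∀ i, (b i, d i) ∈ f := fun i => hff0 (Or.inr ⟨i, rfl⟩)
  have key : ∀ X : Finset ι, (∀ x ∈ X, x ∉ s0) → N X ⊆ pdom f ∧ N' X ⊆ pimg f := by
    intro X
    induction X using Finset.strongInduction with
    | H X ih =>
    intro hXs
    rcases X.eq_empty_or_nonempty with rfl | hne
    · constructor
      · simp only [N, Finset.coe_empty, union_empty]
        rw [← hp0d]
        exact pdom_mono (subset_union_left.trans hff0)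
      · simp only [N', Finset.coe_empty, union_empty]
        rw [← hp0i]
        exact pimg_mono (subset_union_left.trans hff0)
    by_contra hX
    have hXe : ¬ X ⊆ ∅ := by
      rw [Finset.subset_empty]
      exact hne.ne_empty
    have hXY : ∀ Y : Finset ι, N Y ⊆ pdom f → N' Y ⊆ pimg f → ¬ X ⊆ Y := by
      intro Y h1 h2 hsub
      have hsub' : s0 ∪ (X : Set ι) ⊆ s0 ∪ Y :=
        union_subset_union_right _ (Finset.coe_subset.2 hsub)
      exact hX ⟨(pg.mono (image_mono hsub')).trans h1, (pg'.mono (image_mono hsub')).trans h2⟩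
    have hc : ∀ p ∈ f, cond H.cl b X p.1 ∧ cond H'.cl d X p.2 := by
      intro p hp
      rcases hfY p hp with (h | ⟨i, rfl⟩) | ⟨Y, h1, h2, h3, h4⟩
      · refine ⟨cond_of pg b (Y := ∅) hXs hXe ?_, cond_of pg' d (Y := ∅) hXs hXe ?_⟩
        · rw [Finset.coe_empty, union_empty, ← hp0d]
          exact ⟨p, h, rfl⟩
        · rw [Finset.coe_empty, union_empty, ← hp0i]
          exact ⟨p, h, rfl⟩
      · exact ⟨cond_basis pg b hne i, cond_basis pg' d hne i⟩
      · exact ⟨cond_of pg b hXs (hXY Y h1 h2) h3, cond_of pg' d hXs (hXY Y h1 h2) h4⟩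
    have ih' : ∀ x ∈ X, N (X.erase x) ⊆ pdom f ∧ N' (X.erase x) ⊆ pimg f := fun x hx =>
      ih _ (Finset.erase_ssubset hx) fun y hy => hXs y (Finset.mem_of_mem_erase hy)
    obtain ⟨f', hf', hff', hd1, hi1, hnew⟩ := ext_big hC hH hH' hb hd hs0 hs0c X hXs hfPE
      (fun p hp => (hc p hp).1) (fun p hp => (hc p hp).2)
      (by
        rintro c (⟨i, -, rfl⟩ | ⟨x, hx, hcx⟩)
        · exact mem_pdom.2 ⟨_, hbd i⟩
        · rw [← Finset.coe_erase] at hcx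
          exact (ih' x hx).1 hcx)
      (by
        rintro c (⟨i, -, rfl⟩ | ⟨x, hx, hcx⟩)
        · exact mem_pimg.2 ⟨_, hbd i⟩
        · rw [← Finset.coe_erase] at hcx
          exact (ih' x hx).2 hcx) hbd
    have hS : f' ∈ S := by
      refine ⟨hf', hff0.trans hff', fun p hp => ?_⟩
      rcases hnew p hp with h | h
      · rcases hfY p h with h | ⟨Y, h1, h2, h3⟩
        · exact Or.inl h
        · exact Or.inr ⟨Y, h1.trans (pdom_mono hff'), h2.trans (pimg_mono hff'), h3⟩
      · exact Or.inr ⟨X, hd1, hi1, h.1, h.2⟩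
    have hle : f' ⊆ f := hmax.le_of_ge hS hff'
    exact hX ⟨hd1.trans (pdom_mono hle), hi1.trans (pimg_mono hle)⟩
  have fin : ∀ D : Set ι, D.Finite → ∃ X : Finset ι, (∀ x ∈ X, x ∉ s0) ∧ D ⊆ s0 ∪ X := by
    intro D hD
    refine ⟨hD.toFinset.filter (· ∉ s0), fun x hx => (Finset.mem_filter.1 hx).2, fun x hx => ?_⟩
    by_cases h : x ∈ s0
    · exact Or.inl h
    · exact Or.inr (by simp [hx, h])
  refine PE.toEquiv hfPE (eq_univ_of_forall fun y => ?_) (eq_univ_of_forall fun y => ?_)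
  · obtain ⟨D, -, hD, hy⟩ := pg.finite_support b Set.univ (finite_singleton y)
      (by rw [hbs]; exact subset_univ _)
    obtain ⟨X, hX, hDX⟩ := fin D hD
    exact (key X hX).1 (pg.mono (image_mono hDX) (hy rfl))
  · obtain ⟨D, -, hD, hy⟩ := pg'.finite_support d Set.univ (finite_singleton y)
      (by rw [hds]; exact subset_univ _)
    obtain ⟨X, hX, hDX⟩ := fin D hD
    exact (key X hX).2 (pg'.mono (image_mono hDX) (hy rfl))

/-- Existence of a basis. -/
lemma exists_basis {α : Type*} {cl : Set α → Set α} (pg : IsPregeometry cl) :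
    ∃ B : Set α, IndepOn cl (Subtype.val : B → α) Set.univ ∧ cl B = Set.univ := by
  obtain ⟨B, -, hmax⟩ := zorn_subset_nonempty {B : Set α | ∀ x ∈ B, x ∉ cl (B \ {x})} (by
    intro c hcS hc hne
    refine ⟨⋃₀ c, ?_, fun s hs => subset_sUnion_of_mem hs⟩
    rintro x ⟨s, hs, hxs⟩ hx
    obtain ⟨F, hF, hxF⟩ := pg.finChar _ _ hx
    obtain ⟨t, ht, hFt⟩ := hc.directedOn.exists_mem_subset_of_finite_of_subset_sUnion hne
      (F.finite_toSet) (hF.trans sdiff_subset)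
    obtain ⟨r, hr, hsr, htr⟩ := hc.directedOn s hs t ht
    refine hcS hr x (hsr hxs) (pg.mono ?_ hxF)
    intro y hy
    exact ⟨htr (hFt hy), (hF hy).2⟩) ∅ (fun x hx => hx.elim)
  refine ⟨B, ?_, eq_univ_of_forall fun y => ?_⟩
  · rintro ⟨x, hx⟩ - J - hJ h
    refine hmax.prop x hx (pg.mono ?_ h)
    rintro _ ⟨⟨z, hz⟩, hzJ, rfl⟩
    refine ⟨hz, ?_⟩
    rintro rfl
    exact hJ hzJ
  · by_contra hy
    have hyB : y ∉ B := fun h => hy (pg.subset_cl _ h)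
    refine hyB (hmax.le_of_ge (y := insert y B) ?_ (subset_insert _ _) (mem_insert _ _))
    rintro x (rfl | hx) hcl
    · exact hy (pg.mono (by rintro z ⟨rfl | hz, h⟩; exacts [(h rfl).elim, hz]) hcl)
    · have h1 : x ∈ cl ((B \ {x}) ∪ {y}) := pg.mono (by
        rintro z ⟨rfl | hz, h⟩
        · exact Or.inr rfl
        · exact Or.inl ⟨hz, h⟩) hcl
      refine hy (pg.mono ?_ (pg.exchange _ _ _ h1 (hmax.prop x hx)))
      rintro z (h | rfl)
      · exact h.1
      · exact hx

lemma mk_basis {α : Type u} {cl : Set α → Set α} (pg : IsPregeometry cl)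
    (hf : ∀ X : Set α, X.Finite → (cl X).Countable) [Uncountable α] {B : Set α}
    (hB : cl B = Set.univ) : Cardinal.mk B = Cardinal.mk α := by
  have hBi : B.Infinite := by
    intro h
    have := pg.countable_cl hf h.countable
    rw [hB] at this
    exact not_countable (α := α) (Set.countable_univ_iff.1 this)
  have : Infinite B := hBi.to_subtype
  refine le_antisymm (mk_set_le B) ?_
  have hcov : Set.univ ⊆ ⋃ F : Finset B, cl (Subtype.val '' (F : Set B)) := by
    intro y _
    obtain ⟨D, -, hD, hy⟩ := pg.finite_support (Subtype.val : B → α) Set.univ (finite_singleton y)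
      (by rw [image_univ, Subtype.range_coe, hB]; exact subset_univ _)
    exact mem_iUnion.2 ⟨hD.toFinset, by simpa using hy⟩
  calc Cardinal.mk α = Cardinal.mk (Set.univ : Set α) := mk_univ.symm
    _ ≤ Cardinal.mk (⋃ F : Finset B, cl (Subtype.val '' (F : Set B))) := mk_le_mk_of_subset hcov
    _ ≤ Cardinal.sum fun F : Finset B => Cardinal.mk (cl (Subtype.val '' (F : Set B))) :=
        mk_iUnion_le_sum_mk
    _ ≤ Cardinal.sum fun F : Finset B => ℵ₀ := sum_le_sum _ _ fun F =>
        le_aleph0_iff_set_countable.2 (hf _ (F.finite_toSet.image _))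
    _ = Cardinal.mk B * ℵ₀ := by rw [sum_const', mk_finset_of_infinite]
    _ = Cardinal.mk B := mul_aleph0_eq (aleph0_le_mk B)

end Final

/-- Any two structures in a quasiminimal pregeometry class of the same
uncountable cardinality are isomorphic as `L`-structures. -/
theorem statement_13 {L : FirstOrder.Language.{v, w}} (C : Set (QMObj.{u} L))
    (hC : IsQMClass C) (H : QMObj.{u} L) (hH : H ∈ C) (H' : QMObj.{u} L) (hH' : H' ∈ C)
    (hcard : Cardinal.mk H.carrier = Cardinal.mk H'.carrier)
    (hunc : Uncountable H.carrier) :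
    Nonempty (H.carrier ≃[L] H'.carrier) := by
  classical
  have pg := hC.pregeom H hH
  have pg' := hC.pregeom H' hH'
  have hunc' : Uncountable H'.carrier := by
    rw [← Cardinal.aleph0_lt_mk_iff, ← hcard, Cardinal.aleph0_lt_mk_iff]
    exact hunc
  obtain ⟨B, hBi, hBs⟩ := exists_basis pg
  obtain ⟨B', hBi', hBs'⟩ := exists_basis pg'
  have hm := mk_basis pg (hC.cl_finite_countable H hH) hBs
  have hm' := mk_basis pg' (hC.cl_finite_countable H' hH') hBs'
  obtain ⟨e⟩ := Cardinal.eq.1 (hm.trans (hcard.trans hm'.symm))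
  have : Infinite B := by
    rw [← Cardinal.aleph0_le_mk_iff, hm]
    exact (Cardinal.aleph0_lt_mk_iff.2 hunc).le
  refine iso_of_bases hC hH hH' (b := (Subtype.val : B → H.carrier))
    (d := fun i => (e i : H'.carrier)) hBi ?_ ?_ ?_
    (s0 := Set.range (Infinite.natEmbedding B))
    (Set.infinite_range_of_injective (Infinite.natEmbedding B).injective) (Set.countable_range _)
  · intro i _ J _ hiJ h
    refine hBi' (e i) (Set.mem_univ _) (e '' J) (Set.subset_univ _) ?_ ?_
    · rintro ⟨j, hj, hji⟩
      exact hiJ (e.injective hji ▸ hj)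
    · rwa [Set.image_image]
  · rw [Set.image_univ, Subtype.range_coe, hBs]
  · have : (fun i => (e i : H'.carrier)) '' Set.univ = B' := by
      ext y
      constructor
      · rintro ⟨i, -, rfl⟩
        exact (e i).2
      · intro hy
        exact ⟨e.symm ⟨y, hy⟩, Set.mem_univ _, by simp⟩
    rw [this, hBs']

end QM
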